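/- arXiv:2203.10655 — 4 statements merged into one kernel-verified Lean document; each statement's English description precedes it below -/
import Mathlib

section
/- Harrington–Kechris–Louveau dichotomy: let X be a Polish space and E an equivalence relation on X that is Borel as a subset of X × X. Then either E is smooth (there is a Borel measurable S : X → ℝ with x₁ E x₂ ↔ S x₁ = S x₂ for all x₁, x₂), or E₀ is Borel reducible to E (there is a Borel measurable φ : (ℕ → Bool) → X with f E₀ g ↔ φ f E φ g for all f, g). -/
/-- The equivalence relation `E₀` on Cantor space: eventual equality. -/
def E0 (f g : ℕ → Bool) : Prop := ∃ N : ℕ, ∀ n : ℕ, N ≤ n → f n = g n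

open Set Filter Topology MeasureTheory

namespace GlimmEffros

section Smallness

variable {X ι : Type*} {E : X → X → Prop}

/-- Two points are indistinguishable by a family of sets if they lie in the same members. -/
def Indist (𝒞 : Set (Set X)) (x y : X) : Prop := ∀ D ∈ 𝒞, x ∈ D ↔ y ∈ D

lemma Indist.symm {𝒞 : Set (Set X)} {x y : X} (h : Indist 𝒞 x y) : Indist 𝒞 y x :=
  fun D hD => (h D hD).symm

lemma Indist.trans {𝒞 : Set (Set X)} {x y z : X} (h : Indist 𝒞 x y) (h' : Indist 𝒞 y z) :
    Indist 𝒞 x z :=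
  fun D hD => (h D hD).trans (h' D hD)

lemma Indist.mono {𝒞 𝒞' : Set (Set X)} (hc : 𝒞 ⊆ 𝒞') {x y : X} (h : Indist 𝒞' x y) :
    Indist 𝒞 x y :=
  fun D hD => h D (hc hD)

/-- Pairs of members of `𝒜`, indexed by `ι × Bool`, which are joined by an `R`-edge between the
point at `p` of the first and the point at `q` of the second. -/
def joined (R : X → X → Prop) (𝒜 : Set (ι → X)) (p q : ι) : Set (ι × Bool → X) :=
  {γ | (∀ b, (fun i => γ (i, b)) ∈ 𝒜) ∧ R (γ (p, false)) (γ (q, true))}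

lemma exists_mem_joined {R : X → X → Prop} {𝒜 : Set (ι → X)} {p q : ι} {𝒞 : Set (Set X)}
    {γ δ : ι → X} (hγ : γ ∈ 𝒜) (hδ : δ ∈ 𝒜) (hR : R (γ p) (δ q))
    (hγi : ∀ i j, Indist 𝒞 (γ i) (γ j)) (hδi : ∀ i j, Indist 𝒞 (δ i) (δ j))
    (hi : Indist 𝒞 (γ p) (δ q)) :
    ∃ η ∈ joined R 𝒜 p q, (∀ i, η (i, false) = γ i) ∧ (∀ i, η (i, true) = δ i) ∧
      ∀ i j, Indist 𝒞 (η i) (η j) := by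
  refine ⟨fun i => if i.2 then δ i.1 else γ i.1, ⟨?_, by simpa using hR⟩, by simp, by simp, ?_⟩
  · rintro (_ | _)
    exacts [by simpa using hγ, by simpa using hδ]
  · have key : ∀ i j, Indist 𝒞 (γ i) (δ j) := fun i j => ((hγi i p).trans hi).trans (hδi q j)
    rintro ⟨i, _ | _⟩ ⟨j, _ | _⟩
    exacts [by simpa using hγi i j, by simpa using key i j, by simpa using (key j i).symm,
      by simpa using hδi i j]

variable [MeasurableSpace X]

/-- A countable family of measurable `E`-invariant sets. -/
def IsInvariantFamily (E : X → X → Prop) (𝒞 : Set (Set X)) : Prop :=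
  𝒞.Countable ∧ ∀ D ∈ 𝒞, MeasurableSet D ∧ ∀ x y, E x y → (x ∈ D ↔ y ∈ D)

lemma IsInvariantFamily.indist {𝒞 : Set (Set X)} (h : IsInvariantFamily E 𝒞) {x y : X}
    (hxy : E x y) : Indist 𝒞 x y :=
  fun D hD => (h.2 D hD).2 x y hxy

lemma IsInvariantFamily.insert {𝒞 : Set (Set X)} (h : IsInvariantFamily E 𝒞) {D : Set X}
    (hD : MeasurableSet D) (hi : ∀ x y, E x y → (x ∈ D ↔ y ∈ D)) :
    IsInvariantFamily E (insert D 𝒞) :=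
  ⟨h.1.insert D, by rintro _ (rfl | hD'); exacts [⟨hD, hi⟩, h.2 _ hD']⟩

lemma IsInvariantFamily.measurableSet_indist {𝒞 : Set (Set X)} (h : IsInvariantFamily E 𝒞) :
    MeasurableSet {p : X × X | Indist 𝒞 p.1 p.2} := by
  have : {p : X × X | Indist 𝒞 p.1 p.2} = ⋂ D ∈ 𝒞, {p : X × X | p.1 ∈ D ↔ p.2 ∈ D} := by
    ext p; simp [Indist]
  rw [this]
  refine MeasurableSet.biInter h.1 fun D hD => ?_
  have h1 : MeasurableSet {p : X × X | p.1 ∈ D} := measurable_fst (h.2 D hD).1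
  have h2 : MeasurableSet {p : X × X | p.2 ∈ D} := measurable_snd (h.2 D hD).1
  exact h1.iff h2

lemma IsInvariantFamily.measurableSet_forall_indist {𝒞 : Set (Set X)}
    [Countable ι] (h : IsInvariantFamily E 𝒞) :
    MeasurableSet {γ : ι → X | ∀ i j, Indist 𝒞 (γ i) (γ j)} := by
  simp only [Set.ofPred_forall]
  refine MeasurableSet.iInter fun i => MeasurableSet.iInter fun j => ?_
  have hm : Measurable fun γ : ι → X => (γ i, γ j) :=
    (measurable_pi_apply i).prodMk (measurable_pi_apply j)
  exact hm h.measurableSet_indist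

lemma measurableSet_joined {R : X → X → Prop} (hR : MeasurableSet {p : X × X | R p.1 p.2})
    {𝒜 : Set (ι → X)} (h𝒜 : MeasurableSet 𝒜) (p q : ι) : MeasurableSet (joined R 𝒜 p q) := by
  have h1 : MeasurableSet {γ : ι × Bool → X | ∀ b, (fun i => γ (i, b)) ∈ 𝒜} := by
    simp only [Set.ofPred_forall]
    refine MeasurableSet.iInter fun b => ?_
    have : Measurable fun (γ : ι × Bool → X) i => γ (i, b) :=
      measurable_pi_lambda _ fun i => measurable_pi_apply _
    exact this h𝒜
  have h2 : Measurable fun γ : ι × Bool → X => (γ (p, false), γ (q, true)) :=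
    (measurable_pi_apply _).prodMk (measurable_pi_apply _)
  exact h1.inter (h2 hR)

/-- A set `𝒜` of configurations `ι → X` is small if some countable family of measurable
`E`-invariant sets coincides with `E` near every configuration in `𝒜` which that family does not
split. -/
def Small (E : X → X → Prop) (𝒜 : Set (ι → X)) : Prop :=
  ∃ 𝒞, IsInvariantFamily E 𝒞 ∧ ∀ γ ∈ 𝒜, (∀ i j, Indist 𝒞 (γ i) (γ j)) →
    ∀ i y, Indist 𝒞 (γ i) y → E (γ i) y

lemma small_empty : Small E (∅ : Set (ι → X)) :=
  ⟨∅, ⟨countable_empty, by simp⟩, by simp⟩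

lemma Small.mono {𝒜 ℬ : Set (ι → X)} (h : Small E ℬ) (hs : 𝒜 ⊆ ℬ) : Small E 𝒜 :=
  let ⟨𝒞, h𝒞, h⟩ := h
  ⟨𝒞, h𝒞, fun γ hγ => h γ (hs hγ)⟩

lemma Small.iUnion {κ : Type*} [Countable κ] {𝒜 : κ → Set (ι → X)} (h : ∀ k, Small E (𝒜 k)) :
    Small E (⋃ k, 𝒜 k) := by
  choose 𝒞 h𝒞 h using h
  refine ⟨⋃ k, 𝒞 k, ⟨countable_iUnion fun k => (h𝒞 k).1, fun D hD => ?_⟩, fun γ hγ hi i y hy => ?_⟩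
  · obtain ⟨k, hk⟩ := mem_iUnion.1 hD
    exact (h𝒞 k).2 D hk
  · obtain ⟨k, hk⟩ := mem_iUnion.1 hγ
    have hm := subset_iUnion 𝒞 k
    exact h k γ hk (fun i j => (hi i j).mono hm) i y (hy.mono hm)

lemma smooth_of_small_univ [Nonempty ι] (h : Small E (univ : Set (ι → X))) :
    ∃ S : X → ℝ, Measurable S ∧ ∀ x₁ x₂ : X, E x₁ x₂ ↔ S x₁ = S x₂ := by
  classical
  obtain ⟨𝒞, h𝒞, h⟩ := h
  have : Countable 𝒞 := h𝒞.1
  let f : X → (𝒞 → Bool) := fun x D => decide (x ∈ D.1)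
  have hf : Measurable f := measurable_pi_lambda _ fun D => measurable_to_bool <| by
    have : (fun x => f x D) ⁻¹' {true} = D.1 := by ext; simp [f]
    rw [this]
    exact (h𝒞.2 D.1 D.2).1
  obtain ⟨g, hg⟩ := exists_measurableEmbedding_real (𝒞 → Bool)
  refine ⟨g ∘ f, hg.measurable.comp hf, fun x y => ?_⟩
  rw [Function.comp, Function.comp, hg.injective.eq_iff]
  constructor
  · intro hxy
    funext D
    simpa [f] using h𝒞.indist hxy D.1 D.2
  · intro hxy
    refine h (fun _ => x) trivial (fun _ _ D _ => Iff.rfl) (Classical.arbitrary ι) y ?_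
    intro D hD
    simpa [f] using congrFun hxy ⟨D, hD⟩

variable [TopologicalSpace X] [PolishSpace X] [BorelSpace X]

/-- Disjoint invariant analytic sets are separated by an invariant Borel set. -/
lemma exists_invariant_separation (hE : Equivalence E)
    (hBorel : MeasurableSet {p : X × X | E p.1 p.2}) {P Q : Set X}
    (hP : AnalyticSet P) (hQ : AnalyticSet Q) (hQi : ∀ x y, E x y → x ∈ Q → y ∈ Q)
    (hd : Disjoint P Q) :
    ∃ D, MeasurableSet D ∧ (∀ x y, E x y → (x ∈ D ↔ y ∈ D)) ∧ P ⊆ D ∧ Disjoint D Q := by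
  have step : ∀ D : {D : Set X // MeasurableSet D ∧ Disjoint D Q},
      ∃ D' : {D : Set X // MeasurableSet D ∧ Disjoint D Q},
        ∀ x y, E x y → x ∈ D.1 → y ∈ D'.1 := by
    rintro ⟨D, hD, hDQ⟩
    have hS : AnalyticSet (Prod.snd '' {p : X × X | E p.1 p.2 ∧ p.1 ∈ D}) :=
      (hBorel.inter (measurable_fst hD)).analyticSet_image measurable_snd
    have hSQ : Disjoint (Prod.snd '' {p : X × X | E p.1 p.2 ∧ p.1 ∈ D}) Q := by
      rw [Set.disjoint_left]
      rintro _ ⟨⟨x, y⟩, ⟨hxy, hx⟩, rfl⟩ hy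
      exact Set.disjoint_left.1 hDQ hx (hQi _ _ (hE.symm hxy) hy)
    obtain ⟨D', h1, h2, h3⟩ := hS.measurablySeparable hQ hSQ
    exact ⟨⟨D', h3, h2.symm⟩, fun x y hxy hx => h1 ⟨(x, y), ⟨hxy, hx⟩, rfl⟩⟩
  choose next hnext using step
  obtain ⟨D₀, h1, h2, h3⟩ := hP.measurablySeparable hQ hd
  let D : ℕ → {D : Set X // MeasurableSet D ∧ Disjoint D Q} :=
    fun n => next^[n] ⟨D₀, h3, h2.symm⟩
  have hD : ∀ n, D (n + 1) = next (D n) := fun n => Function.iterate_succ_apply' _ _ _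
  have hinv : ∀ x y, E x y → x ∈ (⋃ n, (D n).1) → y ∈ (⋃ n, (D n).1) := by
    intro x y hxy hx
    obtain ⟨n, hn⟩ := mem_iUnion.1 hx
    exact mem_iUnion.2 ⟨n + 1, by rw [hD]; exact hnext _ x y hxy hn⟩
  refine ⟨⋃ n, (D n).1, MeasurableSet.iUnion fun n => (D n).2.1,
    fun x y hxy => ⟨hinv x y hxy, hinv y x (hE.symm hxy)⟩,
    fun x hx => mem_iUnion.2 ⟨0, h1 hx⟩, disjoint_iUnion_left.2 fun n => (D n).2.2⟩

variable [Countable ι]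

lemma small_of_small_joined_rel (hE : Equivalence E)
    (hBorel : MeasurableSet {p : X × X | E p.1 p.2}) {𝒜 : Set (ι → X)} (h𝒜 : MeasurableSet 𝒜)
    {p q : ι} (h : Small E (joined E 𝒜 p q)) : Small E 𝒜 := by
  obtain ⟨𝒞, h𝒞, h⟩ := h
  set S : Set (ι → X) := {γ | γ ∈ 𝒜 ∧ ∀ i j, Indist 𝒞 (γ i) (γ j)}
  have hS : MeasurableSet S := h𝒜.inter h𝒞.measurableSet_forall_indist
  -- the saturation of the points at `k` of those unsplit configurations on which `𝒞` is not `E`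
  let T : ι → Set ((ι → X) × X × X) := fun k =>
    {t | t.1 ∈ S ∧ (Indist 𝒞 (t.1 p) t.2.1 ∧ ¬ E (t.1 p) t.2.1) ∧ E (t.1 k) t.2.2}
  have hev : ∀ k, Measurable fun t : (ι → X) × X × X => t.1 k :=
    fun k => (measurable_pi_apply k).comp measurable_fst
  have hT : ∀ k, MeasurableSet (T k) := fun k =>
    (measurable_fst hS).inter <| MeasurableSet.inter
      ((((hev p).prodMk measurable_snd.fst) h𝒞.measurableSet_indist).inter
        (((hev p).prodMk measurable_snd.fst) hBorel.compl))
      (((hev k).prodMk measurable_snd.snd) hBorel)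
  have hA : ∀ k, AnalyticSet ((fun t : (ι → X) × X × X => t.2.2) '' T k) := fun k =>
    (hT k).analyticSet_image measurable_snd.snd
  obtain ⟨D, hDm, hDi, hD1, hD2⟩ := exists_invariant_separation hE hBorel (hA p) (hA q)
    (by
      rintro x y hxy ⟨⟨γ, w, x⟩, ⟨h1, h2, h3⟩, rfl⟩
      exact ⟨⟨γ, w, y⟩, ⟨h1, h2, hE.trans h3 hxy⟩, rfl⟩)
    (by
      rw [Set.disjoint_left]
      rintro x ⟨⟨γ, w, x⟩, ⟨h1, h2, h3⟩, rfl⟩ ⟨⟨δ, w', x'⟩, ⟨h1', h2', h3'⟩, heq⟩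
      obtain rfl : x' = x := heq
      have hpq : E (γ p) (δ q) := hE.trans h3 (hE.symm h3')
      obtain ⟨η, hη, hη0, -, hηi⟩ := exists_mem_joined h1.1 h1'.1 hpq h1.2 h1'.2
        (h𝒞.indist hpq)
      have := h η hη hηi (p, false) w (by rw [hη0]; exact h2.1)
      rw [hη0] at this
      exact h2.2 this)
  refine ⟨insert D 𝒞, h𝒞.insert hDm hDi, fun γ hγ hi => ?_⟩
  have hi' : ∀ i j, Indist 𝒞 (γ i) (γ j) := fun i j => (hi i j).mono (subset_insert _ _)
  have hp : ∀ w, Indist 𝒞 (γ p) w → E (γ p) w := by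
    by_contra! hw
    obtain ⟨w, hw1, hw2⟩ := hw
    have h1 : γ p ∈ D := hD1 ⟨(γ, w, γ p), ⟨⟨hγ, hi'⟩, ⟨hw1, hw2⟩, hE.refl _⟩, rfl⟩
    have h2 : γ q ∈ D := (hi p q D (mem_insert _ _)).1 h1
    exact Set.disjoint_left.1 hD2 h2 ⟨(γ, w, γ q), ⟨⟨hγ, hi'⟩, ⟨hw1, hw2⟩, hE.refl _⟩, rfl⟩
  intro i y hy
  exact hE.trans (hE.symm (hp _ (hi' p i)))
    (hp y ((hi' p i).trans (hy.mono (subset_insert _ _))))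

lemma small_of_small_joined_not_rel (hE : Equivalence E)
    (hBorel : MeasurableSet {p : X × X | E p.1 p.2}) {𝒜 : Set (ι → X)} (h𝒜 : MeasurableSet 𝒜)
    {p : ι} (h : Small E (joined (fun x y => ¬ E x y) 𝒜 p p)) : Small E 𝒜 := by
  obtain ⟨𝒞, h𝒞, h⟩ := h
  set S : Set (ι → X) := {γ | γ ∈ 𝒜 ∧ ∀ i j, Indist 𝒞 (γ i) (γ j)}
  have hS : MeasurableSet S := h𝒜.inter h𝒞.measurableSet_forall_indist
  have hev : Measurable fun t : (ι → X) × X => (t.1 p, t.2) :=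
    ((measurable_pi_apply p).comp measurable_fst).prodMk measurable_snd
  have hP : AnalyticSet (Prod.snd '' {t : (ι → X) × X | t.1 ∈ S ∧ E (t.1 p) t.2}) :=
    ((measurable_fst hS).inter (hev hBorel)).analyticSet_image measurable_snd
  have hQ : AnalyticSet (Prod.snd ''
      {t : (ι → X) × X | t.1 ∈ S ∧ Indist 𝒞 (t.1 p) t.2 ∧ ¬ E (t.1 p) t.2}) :=
    ((measurable_fst hS).inter ((hev h𝒞.measurableSet_indist).inter
      (hev hBorel.compl))).analyticSet_image measurable_snd
  obtain ⟨D, hDm, hDi, hD1, hD2⟩ := exists_invariant_separation hE hBorel hP hQ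
    (by
      rintro x y hxy ⟨⟨γ, x⟩, ⟨h1, h2, h3⟩, rfl⟩
      exact ⟨⟨γ, y⟩, ⟨h1, h2.trans (h𝒞.indist hxy),
        fun h => h3 (hE.trans h (hE.symm hxy))⟩, rfl⟩)
    (by
      rw [Set.disjoint_left]
      rintro x ⟨⟨γ, x⟩, ⟨h1, h2⟩, rfl⟩ ⟨⟨δ, x'⟩, ⟨h1', h2', h3'⟩, heq⟩
      obtain rfl : x' = x := heq
      have hpq : ¬ E (γ p) (δ p) := fun h => h3' (hE.trans (hE.symm h) h2)
      have hi : Indist 𝒞 (γ p) (δ p) := (h𝒞.indist h2).trans h2'.symm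
      obtain ⟨η, hη, hη0, hη1, hηi⟩ := exists_mem_joined (R := fun x y => ¬ E x y) h1.1 h1'.1 hpq
        h1.2 h1'.2 hi
      exact hη.2 (h η hη hηi (p, false) _ (hηi _ _)))
  refine ⟨insert D 𝒞, h𝒞.insert hDm hDi, fun γ hγ hi => ?_⟩
  have hi' : ∀ i j, Indist 𝒞 (γ i) (γ j) := fun i j => (hi i j).mono (subset_insert _ _)
  have hp : ∀ w, Indist (insert D 𝒞) (γ p) w → E (γ p) w := by
    by_contra! hw
    obtain ⟨w, hw1, hw2⟩ := hw
    have h1 : γ p ∈ D := hD1 ⟨(γ, γ p), ⟨⟨hγ, hi'⟩, hE.refl _⟩, rfl⟩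
    exact Set.disjoint_left.1 hD2 ((hw1 D (mem_insert _ _)).1 h1)
      ⟨(γ, w), ⟨⟨hγ, hi'⟩, hw1.mono (subset_insert _ _), hw2⟩, rfl⟩
  intro i y hy
  exact hE.trans (hE.symm (hp _ (hi p i))) (hp y ((hi p i).trans hy))

end Smallness

section Cantor

/-- The sequence which follows `w` below `L` and `z` from `L` on. -/
def glue (L : ℕ) (w z : ℕ → Bool) : ℕ → Bool := fun j => if j < L then w j else z j

lemma glue_of_lt {L j : ℕ} {w z : ℕ → Bool} (h : j < L) : glue L w z j = w j := if_pos h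

lemma glue_of_le {L j : ℕ} {w z : ℕ → Bool} (h : L ≤ j) : glue L w z j = z j := if_neg h.not_gt

lemma glue_glue_of_agree {L M N : ℕ} (hMN : M ≤ N) {c r a : ℕ → Bool}
    (hc : ∀ i < M, c i = glue L a r i) (b z : ℕ → Bool) :
    glue L b (glue N c z) = glue L b (glue M r (glue N c z)) := by
  funext j
  by_cases h1 : j < L
  · rw [glue_of_lt h1, glue_of_lt h1]
  · rw [glue_of_le (L := L) (by omega), glue_of_le (L := L) (by omega)]
    by_cases h2 : j < M
    · rw [glue_of_lt (by omega), glue_of_lt h2, hc j h2, glue_of_le (by omega)]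
    · rw [glue_of_le (L := M) (by omega)]

lemma measurable_glue (L : ℕ) {α : Type*} [MeasurableSpace α] {f g : α → ℕ → Bool}
    (hf : Measurable f) (hg : Measurable g) : Measurable fun x => glue L (f x) (g x) := by
  refine measurable_pi_lambda _ fun j => ?_
  by_cases h : j < L
  · simpa only [glue, h, if_true] using measurable_pi_iff.1 hf j
  · simpa only [glue, h, if_false] using measurable_pi_iff.1 hg j

lemma continuous_glue (L : ℕ) (w : ℕ → Bool) : Continuous (glue L w) := by
  refine continuous_pi fun j => ?_
  by_cases h : j < L
  · simpa only [glue, h, if_true] using continuous_const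
  · simpa only [glue, h, if_false] using continuous_apply j

lemma isOpen_cylinder (L : ℕ) (w : ℕ → Bool) : IsOpen {x : ℕ → Bool | ∀ i < L, x i = w i} := by
  have : {x : ℕ → Bool | ∀ i < L, x i = w i} = ⋂ i ∈ Finset.range L, {x | x i = w i} := by
    ext x; simp
  rw [this]
  refine isOpen_biInter_finset fun i _ => ?_
  exact (isOpen_discrete {w i}).preimage (continuous_apply (A := fun _ : ℕ => Bool) i)

lemma isOpenMap_glue (L : ℕ) (w : ℕ → Bool) : IsOpenMap (glue L w) := by
  intro U hU
  have : glue L w '' U = {x | ∀ i < L, x i = w i} ∩ {x | ∃ v, glue L v x ∈ U} := by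
    ext x
    constructor
    · rintro ⟨z, hz, rfl⟩
      refine ⟨fun i hi => glue_of_lt hi, z, ?_⟩
      convert hz using 1
      funext j
      by_cases h : j < L <;> simp [glue, h]
    · rintro ⟨hx, v, hv⟩
      refine ⟨_, hv, ?_⟩
      funext j
      by_cases h : j < L <;> simp [glue, h]
      exact (hx j h).symm
  rw [this]
  refine (isOpen_cylinder L w).inter ?_
  have : {x | ∃ v, glue L v x ∈ U} = ⋃ v, glue L v ⁻¹' U := by ext; simp
  rw [this]
  exact isOpen_iUnion fun v => hU.preimage (continuous_glue L v)

/-- Every neighbourhood in the Cantor space contains a cylinder. -/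
lemma exists_cylinder_subset {x : ℕ → Bool} {U : Set (ℕ → Bool)} (hU : U ∈ 𝓝 x) :
    ∃ L, {y | ∀ i < L, y i = x i} ⊆ U := by
  rw [nhds_pi, Filter.mem_pi] at hU
  obtain ⟨I, hI, t, ht, hs⟩ := hU
  obtain ⟨L, hL⟩ := hI.bddAbove
  refine ⟨L + 1, fun y hy => hs fun i hi => ?_⟩
  rw [hy i (Nat.lt_succ_of_le (hL hi))]
  exact mem_of_mem_nhds (ht i)

lemma exists_cylinder_prod_subset {x y : ℕ → Bool} {U : Set ((ℕ → Bool) × (ℕ → Bool))}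
    (hU : U ∈ 𝓝 (x, y)) (m : ℕ) :
    ∃ L, m ≤ L ∧ ∀ a b : ℕ → Bool, (∀ i < L, a i = x i) → (∀ i < L, b i = y i) → (a, b) ∈ U := by
  obtain ⟨V, hV, W, hW, hVW⟩ := mem_nhds_prod_iff.1 hU
  obtain ⟨L, hL⟩ := exists_cylinder_subset hV
  obtain ⟨L', hL'⟩ := exists_cylinder_subset hW
  refine ⟨max m (max L L'), le_max_left _ _, fun a b ha hb => hVW ⟨hL ?_, hL' ?_⟩⟩
  · exact fun i hi => ha i (by omega)
  · exact fun i hi => hb i (by omega)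

/-- A measurable relation which is symmetric and transitive, and which in every cylinder misses
some pair of sequences differing only at one fixed place, is meagre. -/
lemma mem_residual_of_edges {R : (ℕ → Bool) → (ℕ → Bool) → Prop}
    (hm : MeasurableSet {p : (ℕ → Bool) × (ℕ → Bool) | R p.1 p.2})
    (hR : ∀ x y z, R x z → R y z → R x y)
    (hedge : ∀ (a : ℕ → Bool) (m : ℕ), ∃ n ≥ m, ∃ p : ℕ → Bool, (∀ i < m, p i = a i) ∧
      ∀ x y : ℕ → Bool, (∀ i < n, x i = p i) → (∀ i < n, y i = p i) → x n = false → y n = true →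
        (∀ i > n, x i = y i) → ¬ R x y) :
    {p : (ℕ → Bool) × (ℕ → Bool) | ¬ R p.1 p.2} ∈ residual ((ℕ → Bool) × (ℕ → Bool)) := by
  obtain ⟨U, hU, hRU⟩ := hm.residualEq_isOpen
  have hRU' : ∀ᶠ p in residual ((ℕ → Bool) × (ℕ → Bool)), (R p.1 p.2 ↔ p ∈ U) :=
    hRU.mono fun p hp => iff_of_eq hp
  rcases U.eq_empty_or_nonempty with rfl | ⟨⟨a, b⟩, hab⟩
  · exact hRU'.mono fun p hp => by simpa using hp
  exfalso
  obtain ⟨L, -, hL⟩ := exists_cylinder_prod_subset (hU.mem_nhds hab) 0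
  obtain ⟨n, hn, p, hpa, hp⟩ := hedge a L
  let g : Bool → (ℕ → Bool) × (ℕ → Bool) → (ℕ → Bool) × (ℕ → Bool) := fun c =>
    Prod.map (glue (n + 1) (glue n p fun _ => c)) (glue L b)
  have hg : ∀ c, ∀ᶠ q in residual ((ℕ → Bool) × (ℕ → Bool)), R (g c q).1 (g c q).2 := by
    intro c
    have := (tendsto_residual_of_isOpenMap (f := g c)
      ((continuous_glue _ _).prodMap (continuous_glue _ _))
      ((isOpenMap_glue _ _).prodMap (isOpenMap_glue _ _))).eventually hRU'
    refine this.mono fun q hq => hq.2 (hL _ _ (fun i hi => ?_) fun i hi => ?_)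
    · change glue (n + 1) (glue n p fun _ => c) q.1 i = a i
      rw [glue_of_lt (by omega), glue_of_lt (by omega), hpa i hi]
    · exact glue_of_lt hi
  obtain ⟨q, hq0, hq1⟩ := (dense_of_mem_residual ((hg false).and (hg true))).nonempty
  refine hp (glue (n + 1) (glue n p fun _ => false) q.1) (glue (n + 1) (glue n p fun _ => true) q.1)
    (fun i hi => ?_) (fun i hi => ?_) ?_ ?_ (fun i hi => ?_) (hR _ _ _ hq0 hq1)
  · rw [glue_of_lt (by omega), glue_of_lt hi]
  · rw [glue_of_lt (by omega), glue_of_lt hi]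
  · rw [glue_of_lt (by omega), glue_of_le le_rfl]
  · rw [glue_of_lt (by omega), glue_of_le le_rfl]
  · rw [glue_of_le (by omega), glue_of_le (by omega)]

lemma exists_antitone_open_dense {α : Type*} [TopologicalSpace α] [BaireSpace α] {S : Set α}
    (hS : S ∈ residual α) :
    ∃ D : ℕ → Set α, (∀ n, IsOpen (D n)) ∧ (∀ n, Dense (D n)) ∧ Antitone D ∧ ⋂ n, D n ⊆ S := by
  obtain ⟨t, hts, htG, htd⟩ := mem_residual.1 hS
  obtain ⟨f, hf, rfl⟩ := htG.eq_iInter_nat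
  refine ⟨fun n => ⋂ i ∈ Finset.range (n + 1), f i,
    fun n => isOpen_biInter_finset fun i _ => hf i, fun n => htd.mono ?_, ?_, ?_⟩
  · exact subset_iInter₂ fun i _ => iInter_subset f i
  · intro m n hmn
    refine biInter_subset_biInter_left fun i hi => ?_
    exact Finset.range_mono (by omega) hi
  · refine Subset.trans (subset_iInter fun n => ?_) hts
    exact (iInter_subset _ n).trans (biInter_subset_of_mem (by simp))

/-- Two common continuations of finitely many pairs of initial segments force all the
resulting pairs into a given dense open set. -/
lemma exists_continuation {D : Set ((ℕ → Bool) × (ℕ → Bool))} (hDo : IsOpen D) (hDd : Dense D)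
    {F : Set ((ℕ → Bool) × (ℕ → Bool))} (hF : F.Finite) (L : ℕ) :
    ∃ L' ≥ L, ∃ r s : ℕ → Bool, ∀ p ∈ F, ∀ z w : ℕ → Bool,
      (glue L p.1 (glue L' r z), glue L p.2 (glue L' s w)) ∈ D := by
  induction F, hF using Set.Finite.induction_on with
  | empty => exact ⟨L, le_rfl, fun _ => false, fun _ => false, by simp⟩
  | @insert p F _ _ ih =>
    obtain ⟨L', hL', r, s, h⟩ := ih
    obtain ⟨⟨c, e⟩, ⟨hc, he⟩, hce⟩ := hDd.inter_open_nonempty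
      ({x | ∀ i < L', x i = glue L p.1 r i} ×ˢ {x | ∀ i < L', x i = glue L p.2 s i})
      ((isOpen_cylinder _ _).prod (isOpen_cylinder _ _)) ⟨(_, _), fun _ _ => rfl, fun _ _ => rfl⟩
    obtain ⟨M, hM, hD⟩ := exists_cylinder_prod_subset (hDo.mem_nhds hce) L'
    refine ⟨M, hL'.trans hM, c, e, ?_⟩
    have key : ∀ (c r a : ℕ → Bool), (∀ i < L', c i = glue L a r i) → ∀ z : ℕ → Bool,
        ∀ i < M, glue L a (glue M c z) i = c i := by
      intro c r a hc z i hi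
      by_cases h1 : i < L
      · rw [glue_of_lt h1, hc i (by omega), glue_of_lt h1]
      · rw [glue_of_le (by omega), glue_of_lt hi]
    rintro q (rfl | hq) z w
    · exact hD _ _ (key c r _ hc z) (key e s _ he w)
    · rw [glue_glue_of_agree hM hc, glue_glue_of_agree hM he]
      exact h q hq _ _

/-- A finite stage in the construction of a reduction of `E₀`: a length and an assignment of
initial segments of that length. -/
structure IsStage (R : (ℕ → Bool) → (ℕ → Bool) → Prop)
    (s : ℕ × ((ℕ → Bool) → (ℕ → Bool))) : Prop where
  measurable : Measurable s.2
  finite : (range s.2).Finite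
  rel : ∀ x y z, R (glue s.1 (s.2 x) z) (glue s.1 (s.2 y) z)

/-- A measurable equivalence relation on the Cantor space that is meagre, and contains edges
joining tails from any cylinder to any other one, is above `E₀`. -/
lemma exists_reduction_of_residual {R : (ℕ → Bool) → (ℕ → Bool) → Prop} (hR : Equivalence R)
    (hres : {p : (ℕ → Bool) × (ℕ → Bool) | ¬ R p.1 p.2} ∈ residual ((ℕ → Bool) × (ℕ → Bool)))
    (hedge : ∀ (a b : ℕ → Bool) (m : ℕ), ∃ n ≥ m, ∃ p q : ℕ → Bool, (∀ i < m, p i = a i) ∧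
      (∀ i < m, q i = b i) ∧
      ∀ x y : ℕ → Bool, (∀ i < n, x i = p i) → (∀ i < n, y i = q i) → x n = false → y n = true →
        (∀ i > n, x i = y i) → R x y) :
    ∃ ψ : (ℕ → Bool) → (ℕ → Bool), Measurable ψ ∧ ∀ x y, E0 x y ↔ R (ψ x) (ψ y) := by
  obtain ⟨D, hDo, hDd, hDa, hDR⟩ := exists_antitone_open_dense hres
  have step : ∀ (n : ℕ) (s : {s // IsStage R s}), ∃ s' : {s // IsStage R s}, s.1.1 < s'.1.1 ∧
      ∃ r : Bool → ℕ → Bool, (∀ x, s'.1.2 x = glue s.1.1 (s.1.2 x) (r (x n))) ∧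
        ∀ x y z w, x n = false → y n = true →
          (glue s'.1.1 (s'.1.2 x) z, glue s'.1.1 (s'.1.2 y) w) ∈ D n := by
    rintro n ⟨⟨L, Ψ⟩, hm, hfin, hrel⟩
    dsimp only at hm hfin hrel ⊢
    obtain ⟨M, hM, r, s, hrs⟩ := exists_continuation (hDo n) (hDd n) (hfin.prod hfin) L
    let x₀ : ℕ → Bool := fun _ => false
    obtain ⟨N, hN, p, q, hp, hq, hpq⟩ := hedge (glue L (Ψ x₀) r) (glue L (Ψ x₀) s) M
    let t : Bool → ℕ → Bool := fun c => glue N (if c then q else p) fun _ => c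
    have glue_glue : ∀ (a : ℕ → Bool) c z, glue (N + 1) (glue L a (t c)) z =
        glue L a (glue (N + 1) (t c) z) := by
      intro a c z
      funext j
      by_cases h1 : j < L
      · rw [glue_of_lt (by omega), glue_of_lt h1, glue_of_lt h1]
      · by_cases h2 : j < N + 1
        · rw [glue_of_lt h2, glue_of_le (by omega), glue_of_le (by omega), glue_of_lt h2]
        · rw [glue_of_le (by omega), glue_of_le (by omega), glue_of_le (by omega)]
    have hbase : ∀ z, R (glue L (Ψ x₀) (glue (N + 1) (t false) z))
        (glue L (Ψ x₀) (glue (N + 1) (t true) z)) := by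
      intro z
      refine hpq _ _ (fun i hi => ?_) (fun i hi => ?_) ?_ ?_ (fun i hi => ?_)
      · by_cases h1 : i < L
        · rw [glue_of_lt h1, hp i (by omega), glue_of_lt h1]
        · rw [glue_of_le (by omega), glue_of_lt (by omega)]
          simp [t, glue, hi]
      · by_cases h1 : i < L
        · rw [glue_of_lt h1, hq i (by omega), glue_of_lt h1]
        · rw [glue_of_le (by omega), glue_of_lt (by omega)]
          simp [t, glue, hi]
      · rw [glue_of_le (by omega), glue_of_lt (by omega)]
        simp [t, glue]
      · rw [glue_of_le (by omega), glue_of_lt (by omega)]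
        simp [t, glue]
      · rw [glue_of_le (by omega), glue_of_le (by omega), glue_of_le (by omega),
          glue_of_le (by omega)]
    refine ⟨⟨(N + 1, fun x => glue L (Ψ x) (t (x n))), ?_, ?_, ?_⟩, ?_, t, fun x => rfl, ?_⟩
    · exact measurable_glue L hm ((measurable_of_finite t).comp (measurable_pi_apply n))
    · refine (hfin.image2 (fun a c => glue L a (t c)) (finite_univ (α := Bool))).subset ?_
      rintro _ ⟨x, rfl⟩
      exact mem_image2_of_mem (mem_range_self x) trivial
    · intro x y z
      dsimp only
      rw [glue_glue, glue_glue]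
      refine hR.trans (hrel x x₀ _) (hR.trans ?_ (hrel x₀ y _))
      rcases x n <;> rcases y n
      exacts [hR.refl _, hbase z, hR.symm (hbase z), hR.refl _]
    · dsimp only; omega
    · intro x y z w hx hy
      dsimp only
      rw [glue_glue, glue_glue, hx, hy]
      rw [glue_glue_of_agree (L := L) (c := t false) (a := Ψ x₀) (r := r)
          (Nat.le_succ_of_le hN) fun i hi => ?_,
        glue_glue_of_agree (L := L) (c := t true) (a := Ψ x₀) (r := s)
          (Nat.le_succ_of_le hN) fun i hi => ?_]
      · exact hrs (Ψ x, Ψ y) ⟨mem_range_self _, mem_range_self _⟩ _ _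
      · rw [← hq i hi]; simp [t, glue, hi.trans_le hN]
      · rw [← hp i hi]; simp [t, glue, hi.trans_le hN]
  choose next hlt r hnext hD using step
  let st : ℕ → {s // IsStage R s} := fun n => Nat.rec
    ⟨(0, fun _ _ => false), measurable_const, (finite_singleton _).subset range_const_subset,
      fun _ _ _ => hR.refl _⟩ (fun n s => next n s) n
  let L : ℕ → ℕ := fun n => (st n).1.1
  let Ψ : ℕ → (ℕ → Bool) → (ℕ → Bool) := fun n => (st n).1.2
  have hLmono : StrictMono L := strictMono_nat_of_lt_succ fun n => hlt n (st n)
  have hΨ : ∀ n x, Ψ (n + 1) x = glue (L n) (Ψ n x) (r n (st n) (x n)) :=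
    fun n x => hnext n (st n) x
  have hstable : ∀ m n, m ≤ n → ∀ x, ∀ j < L m, Ψ n x j = Ψ m x j := by
    intro m n hmn x j hj
    induction n, hmn using Nat.le_induction with
    | base => rfl
    | succ n hmn ih => rw [hΨ, glue_of_lt (hj.trans_le (hLmono.monotone hmn)), ih]
  let ψ : (ℕ → Bool) → (ℕ → Bool) := fun x j => Ψ (j + 1) x j
  have hψ : ∀ n x j, j < L n → ψ x j = Ψ n x j := by
    intro n x j hj
    rcases le_total n (j + 1) with h | h
    · exact hstable _ _ h x j hj
    · exact (hstable _ _ h x j (Nat.lt_of_succ_le (hLmono.le_apply (x := j + 1)))).symm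
  have hψglue : ∀ n x, ψ x = glue (L n) (Ψ n x) (ψ x) := by
    intro n x
    funext j
    by_cases h : j < L n
    · rw [glue_of_lt h, hψ n x j h]
    · rw [glue_of_le (by omega)]
  have hnot : ∀ x y, (∃ᶠ n in atTop, x n = false ∧ y n = true) → ¬ R (ψ x) (ψ y) := by
    intro x y h
    refine hDR (mem_iInter.2 fun m => ?_ : (ψ x, ψ y) ∈ ⋂ n, D n)
    obtain ⟨n, hn, hx, hy⟩ := frequently_atTop.1 h m
    refine hDa hn ?_
    rw [hψglue (n + 1) x, hψglue (n + 1) y]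
    exact hD n (st n) x y _ _ hx hy
  refine ⟨ψ, measurable_pi_lambda _ fun j => (measurable_pi_apply j).comp (st (j + 1)).2.measurable,
    fun x y => ⟨?_, fun h => ?_⟩⟩
  · rintro ⟨N, hN⟩
    have hagree : ∀ n, N ≤ n → ∀ j, L N ≤ j → j < L n → Ψ n x j = Ψ n y j := by
      intro n hn
      induction n, hn using Nat.le_induction with
      | base => intro j h1 h2; omega
      | succ n hn ih =>
        intro j h1 h2
        rw [hΨ, hΨ, hN n hn]
        by_cases h3 : j < L n
        · rw [glue_of_lt h3, glue_of_lt h3, ih j h1 h3]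
        · rw [glue_of_le (by omega), glue_of_le (by omega)]
    have : ψ y = glue (L N) (Ψ N y) (ψ x) := by
      funext j
      by_cases h : j < L N
      · rw [glue_of_lt h, hψ N y j h]
      · have h1 : j < L (max N (j + 1)) := lt_of_lt_of_le (Nat.lt_succ_self j)
          ((le_max_right N _).trans hLmono.le_apply)
        rw [glue_of_le (by omega), hψ _ x j h1, hψ _ y j h1,
          hagree _ (le_max_left _ _) j (by omega) h1]
    rw [this, hψglue N x]
    convert (st N).2.rel x y (ψ x) using 1
    · rw [← hψglue N x]
  · by_contra hE
    have hf : ∃ᶠ n in atTop, (x n = false ∧ y n = true) ∨ (y n = false ∧ x n = true) := by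
      rw [frequently_atTop]
      intro N
      by_contra! hN
      refine hE ⟨N, fun n hn => ?_⟩
      have := hN n hn
      revert this
      cases x n <;> cases y n <;> simp
    rcases frequently_or_distrib.1 hf with hf | hf
    · exact hnot x y hf h
    · exact hnot y x hf (hR.symm h)

end Cantor

section Construction

/-- A refinement of the topology of a product which makes a given Borel set clopen, presented as
a complete metric space. -/
lemma exists_clopen_refinement {Y : Type} [tY : TopologicalSpace Y] [hY : PolishSpace Y]
    [MeasurableSpace Y] [hB : BorelSpace Y] {s : Set Y} (hs : MeasurableSet s) :
    ∃ (M : Type) (_ : MetricSpace M) (_ : CompleteSpace M) (_ : SecondCountableTopology M)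
      (_ : MeasurableSpace M) (_ : BorelSpace M) (g : M → Y) (h : Y → M),
      Continuous g ∧ Measurable h ∧ (∀ y, g (h y) = y) ∧ IsClopen (g ⁻¹' s) := by
  obtain ⟨t, htle, htP, htc, hto⟩ := hs.isClopenable
  have hb : @borel Y t = @borel Y tY := borel_eq_borel_of_le htP hY htle
  let m := @TopologicalSpace.upgradeIsCompletelyMetrizable Y t inferInstance
  refine ⟨Y, m.toMetricSpace, m.toCompleteSpace, htP.toSecondCountableTopology, @borel Y t,
    @BorelSpace.mk Y t (@borel Y t) rfl, id, id, continuous_id_iff_le.2 htle, ?_, fun _ => rfl,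
    htc, hto⟩
  rw [hb, ← hB.measurable_eq]
  exact measurable_id

/-- Index set of the configurations of order `n`, i.e. binary strings of length `n`. -/
def Idx : ℕ → Type
  | 0 => Unit
  | n + 1 => Idx n × Bool

instance Idx.finite : ∀ n, Finite (Idx n)
  | 0 => inferInstanceAs (Finite Unit)
  | n + 1 => have := Idx.finite n; inferInstanceAs (Finite (Idx n × Bool))

/-- The initial segment of length `n` of a binary sequence. -/
def restr (x : ℕ → Bool) : ∀ n, Idx n
  | 0 => ()
  | n + 1 => (restr x n, x n)

lemma restr_congr {x y : ℕ → Bool} {n : ℕ} (h : ∀ i < n, x i = y i) : restr x n = restr y n := by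
  induction n with
  | zero => rfl
  | succ n ih =>
    exact Prod.ext (ih fun i hi => h i (by omega)) (h n (by omega))

lemma measurable_comp_restr {X : Type*} [MeasurableSpace X] :
    ∀ (n : ℕ) (f : Idx n → X), Measurable fun x => f (restr x n)
  | 0, f => measurable_const (a := f ())
  | n + 1, f => by
    have : (fun x => f (restr x (n + 1))) =
        fun x => if x n = true then f (restr x n, true) else f (restr x n, false) := by
      funext x
      cases h : x n <;> simp [restr, h]
    rw [this]
    exact Measurable.ite (measurableSet_eq_fun (measurable_pi_apply n) measurable_const)
      (measurable_comp_restr n fun i => f (i, true)) (measurable_comp_restr n fun i => f (i, false))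

lemma exists_schedule : ∃ (kind : ℕ → Bool) (p q : ℕ → ℕ → Bool),
    (∀ (a : ℕ → Bool) (m : ℕ), ∃ n ≥ m, kind n = true ∧ ∀ i < m, p n i = a i) ∧
    ∀ (a b : ℕ → Bool) (m : ℕ), ∃ n ≥ m, kind n = false ∧ (∀ i < m, p n i = a i) ∧
      ∀ i < m, q n i = b i := by
  obtain ⟨f, hf⟩ := exists_surjective_nat (Bool × Finset ℕ × Finset ℕ)
  have hf' : ∀ v m, ∃ n : ℕ, n ≥ m ∧ f n.unpair.1 = v := by
    intro v m
    obtain ⟨k, rfl⟩ := hf v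
    exact ⟨Nat.pair k m, Nat.right_le_pair k m, by simp⟩
  let F : (ℕ → Bool) → ℕ → Finset ℕ := fun a m => (Finset.range m).filter fun i => a i = true
  have hF : ∀ a m, ∀ i < m, decide (i ∈ F a m) = a i := by
    intro a m i hi
    cases h : a i <;> simp [F, hi, h]
  refine ⟨fun n => (f n.unpair.1).1, fun n i => decide (i ∈ (f n.unpair.1).2.1),
    fun n i => decide (i ∈ (f n.unpair.1).2.2), fun a m => ?_, fun a b m => ?_⟩
  · obtain ⟨n, hn, h⟩ := hf' (true, F a m, ∅) m
    exact ⟨n, hn, by simp [h], fun i hi => by simp only [h]; exact hF a m i hi⟩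
  · obtain ⟨n, hn, h⟩ := hf' (false, F a m, F b m) m
    exact ⟨n, hn, by simp [h], fun i hi => by simp only [h]; exact hF a m i hi,
      fun i hi => by simp only [h]; exact hF b m i hi⟩

variable {X : Type} [MeasurableSpace X] {E : X → X → Prop}

/-- A set of configurations which is not small has a measurable subset that is not small and on
which all pairs of points are confined to small balls of an auxiliary metric space. -/
lemma exists_subset_dist_le {M : Type} [MetricSpace M] [SecondCountableTopology M]
    [MeasurableSpace M] [BorelSpace M] {h : X × X → M} (hh : Measurable h)
    {ι : Type} [Finite ι] {𝒜 : Set (ι → X)} (h𝒜 : MeasurableSet 𝒜) (hs : ¬ Small E 𝒜)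
    {ε : ℝ} (hε : 0 < ε) :
    ∃ ℬ ⊆ 𝒜, MeasurableSet ℬ ∧ ¬ Small E ℬ ∧
      ∀ γ ∈ ℬ, ∀ δ ∈ ℬ, ∀ i j, dist (h (γ i, γ j)) (h (δ i, δ j)) ≤ ε := by
  obtain ⟨S, hSc, hSd⟩ := TopologicalSpace.exists_countable_dense M
  have : Countable S := hSc
  let ℬ : (ι × ι → S) → Set (ι → X) := fun k =>
    𝒜 ∩ {γ | ∀ i j, h (γ i, γ j) ∈ Metric.ball ((k (i, j) : M)) (ε / 2)}
  have hℬ : ∀ k, MeasurableSet (ℬ k) := by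
    intro k
    refine h𝒜.inter ?_
    simp only [Set.ofPred_forall]
    refine MeasurableSet.iInter fun i => MeasurableSet.iInter fun j => ?_
    have hm : Measurable fun γ : ι → X => h (γ i, γ j) :=
      hh.comp ((measurable_pi_apply i).prodMk (measurable_pi_apply j))
    exact hm Metric.isOpen_ball.measurableSet
  have hcover : 𝒜 ⊆ ⋃ k, ℬ k := by
    intro γ hγ
    have : ∀ ij : ι × ι, ∃ c : S, h (γ ij.1, γ ij.2) ∈ Metric.ball (c : M) (ε / 2) := by
      intro ij
      obtain ⟨c, hc, hd⟩ := hSd.exists_dist_lt (h (γ ij.1, γ ij.2)) (half_pos hε)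
      exact ⟨⟨c, hc⟩, hd⟩
    choose k hk using this
    exact mem_iUnion.2 ⟨k, hγ, fun i j => hk (i, j)⟩
  obtain ⟨k, hk⟩ : ∃ k, ¬ Small E (ℬ k) := by
    by_contra! hall
    exact hs ((Small.iUnion hall).mono hcover)
  refine ⟨ℬ k, inter_subset_left, hℬ k, hk, fun γ hγ δ hδ i j => ?_⟩
  have h1 := Metric.mem_ball.1 (hγ.2 i j)
  have h2 := Metric.mem_ball'.1 (hδ.2 i j)
  linarith [dist_triangle (h (γ i, γ j)) ((k (i, j) : M)) (h (δ i, δ j))]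

variable [TopologicalSpace X] [PolishSpace X] [BorelSpace X]

/-- If `E` is not smooth, then some measurable map from the Cantor space to `X` sends prescribed
pairs of sequences with a common tail to `E`-related, respectively `E`-unrelated, points. -/
lemma exists_edge_hom (hE : Equivalence E) (hBorel : MeasurableSet {p : X × X | E p.1 p.2})
    (hns : ¬ ∃ S : X → ℝ, Measurable S ∧ ∀ x₁ x₂ : X, E x₁ x₂ ↔ S x₁ = S x₂)
    (kind : ℕ → Bool) (p q : ℕ → ℕ → Bool) :
    ∃ φ : (ℕ → Bool) → X, Measurable φ ∧ ∀ (n : ℕ) (x y : ℕ → Bool),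
      (∀ i < n, x i = p n i) → (∀ i < n, y i = if kind n then p n i else q n i) →
      x n = false → y n = true → (∀ i > n, x i = y i) → (E (φ x) (φ y) ↔ kind n = false) := by
  obtain ⟨M, _, _, _, _, _, g, h, hg, hh, hgh, hclopen⟩ := exists_clopen_refinement hBorel
  let Good : ∀ n, Set (Idx n → X) → Prop := fun n 𝒜 => MeasurableSet 𝒜 ∧ ¬ Small E 𝒜
  let R : ℕ → X → X → Prop := fun n x y => E x y ↔ kind n = false
  let q' : ℕ → ℕ → Bool := fun n i => if kind n then p n i else q n i
  have step : ∀ (n : ℕ) (𝒜 : {𝒜 // Good n 𝒜}), ∃ ℬ : {ℬ // Good (n + 1) ℬ},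
      ℬ.1 ⊆ joined (R n) 𝒜.1 (restr (p n) n) (restr (q' n) n) ∧
      ∀ γ ∈ ℬ.1, ∀ δ ∈ ℬ.1, ∀ i j, dist (h (γ i, γ j)) (h (δ i, δ j)) ≤ (1 / 2 : ℝ) ^ n := by
    rintro n ⟨𝒜, hm, hs⟩
    have hj : MeasurableSet (joined (R n) 𝒜 (restr (p n) n) (restr (q' n) n)) ∧
        ¬ Small E (joined (R n) 𝒜 (restr (p n) n) (restr (q' n) n)) := by
      cases hk : kind n
      · have hR : R n = E := by funext x y; simp [R, hk]
        rw [hR]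
        exact ⟨measurableSet_joined hBorel hm _ _,
          fun h => hs (small_of_small_joined_rel hE hBorel hm h)⟩
      · have hR : R n = fun x y => ¬ E x y := by funext x y; simp [R, hk]
        have hq : q' n = p n := by funext i; simp [q', hk]
        rw [hR, hq]
        exact ⟨measurableSet_joined hBorel.compl hm _ _,
          fun h => hs (small_of_small_joined_not_rel hE hBorel hm h)⟩
    have : Finite (Idx n × Bool) := inferInstance
    obtain ⟨ℬ, h1, h2, h3, h4⟩ := exists_subset_dist_le hh hj.1 hj.2
      (pow_pos (by norm_num : (0 : ℝ) < 1 / 2) n)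
    exact ⟨⟨ℬ, h2, h3⟩, h1, h4⟩
  choose next hnext hdist using step
  let 𝒜 : ∀ n, {𝒜 // Good n 𝒜} := fun n => Nat.rec
    ⟨univ, MeasurableSet.univ, fun h => hns (@smooth_of_small_univ X Unit _ _ _ h)⟩ next n
  have hjoin : ∀ n, (𝒜 (n + 1)).1 ⊆ joined (R n) (𝒜 n).1 (restr (p n) n) (restr (q' n) n) :=
    fun n => hnext n (𝒜 n)
  have hd : ∀ n, ∀ γ ∈ (𝒜 (n + 1)).1, ∀ δ ∈ (𝒜 (n + 1)).1, ∀ i j,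
      dist (h (γ i, γ j)) (h (δ i, δ j)) ≤ (1 / 2 : ℝ) ^ n := fun n => hdist n (𝒜 n)
  have hne : ∀ n, ∃ γ, γ ∈ (𝒜 n).1 := by
    intro n
    by_contra! hn
    refine (𝒜 n).2.2 ?_
    rw [eq_empty_of_forall_notMem hn]
    exact small_empty
  choose γ hγ using hne
  -- configurations of high order restrict to ones of low order along sequences with equal tails
  have hrestr : ∀ (x y : ℕ → Bool) (n : ℕ), (∀ i ≥ n, x i = y i) → ∀ k ≥ n, ∀ δ ∈ (𝒜 k).1,
      ∃ η ∈ (𝒜 n).1, η (restr x n) = δ (restr x k) ∧ η (restr y n) = δ (restr y k) := by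
    intro x y n hxy k hk
    induction k, hk using Nat.le_induction with
    | base => exact fun δ hδ => ⟨δ, hδ, rfl, rfl⟩
    | succ k hk ih =>
      intro δ hδ
      obtain ⟨η, hη, h1, h2⟩ := ih _ ((hjoin k hδ).1 (x k))
      exact ⟨η, hη, h1, by rw [h2, hxy k hk]; rfl⟩
  have hlim : ∀ x y : ℕ → Bool, (∃ n, ∀ i ≥ n, x i = y i) →
      ∃ m, Tendsto (fun k => h (γ k (restr x k), γ k (restr y k))) atTop (𝓝 m) := by
    rintro x y ⟨n, hn⟩
    refine cauchySeq_tendsto_of_complete ?_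
    rw [Metric.cauchySeq_iff']
    intro ε hε
    obtain ⟨N, hN⟩ := exists_pow_lt_of_lt_one hε (by norm_num : (1 / 2 : ℝ) < 1)
    refine ⟨max n N + 1, fun k hk => ?_⟩
    obtain ⟨η, hη, h1, h2⟩ := hrestr x y (max n N + 1) (fun i hi => hn i (by omega)) k hk _ (hγ k)
    rw [← h1, ← h2]
    refine (hd _ _ hη _ (hγ (max n N + 1)) _ _).trans_lt (lt_of_le_of_lt ?_ hN)
    exact pow_le_pow_of_le_one (by norm_num) (by norm_num) (le_max_right _ _)
  have hlim' : ∀ x : ℕ → Bool, ∃ z, Tendsto (fun k => γ k (restr x k)) atTop (𝓝 z) := by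
    intro x
    obtain ⟨m, hm⟩ := hlim x x ⟨0, fun _ _ => rfl⟩
    refine ⟨(g m).1, ?_⟩
    have := (continuous_fst.tendsto _).comp ((hg.tendsto m).comp hm)
    simpa [Function.comp_def, hgh] using this
  choose φ hφ using hlim'
  refine ⟨φ, measurable_of_tendsto_metrizable (fun k => measurable_comp_restr k (γ k))
    (tendsto_pi_nhds.2 hφ), fun n x y hx hy hxn hyn hxy => ?_⟩
  obtain ⟨m, hm⟩ := hlim x y ⟨n + 1, fun i hi => hxy i (by omega)⟩
  have hgm : g m = (φ x, φ y) := by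
    refine tendsto_nhds_unique ((hg.tendsto m).comp hm) ?_
    simpa [Function.comp_def, hgh] using (hφ x).prodMk_nhds (hφ y)
  have hev : ∀ k ≥ n + 1, (E (γ k (restr x k)) (γ k (restr y k)) ↔ kind n = false) := by
    intro k hk
    obtain ⟨η, hη, h1, h2⟩ := hrestr x y (n + 1) (fun i hi => hxy i (by omega)) k hk _ (hγ k)
    have h3 : restr x (n + 1) = (restr (p n) n, false) := Prod.ext (restr_congr hx) hxn
    have h4 : restr y (n + 1) = (restr (q' n) n, true) := Prod.ext (restr_congr hy) hyn
    rw [← h1, ← h2, h3, h4]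
    exact (hjoin n hη).2
  have hmem : ∀ k, h (γ k (restr x k), γ k (restr y k)) ∈ g ⁻¹' {p : X × X | E p.1 p.2} ↔
      E (γ k (restr x k)) (γ k (restr y k)) := by
    intro k; simp [hgh]
  have hlimmem : m ∈ g ⁻¹' {p : X × X | E p.1 p.2} ↔ E (φ x) (φ y) := by simp [hgm]
  constructor
  · intro hφE
    have := hm.eventually (hclopen.isOpen.mem_nhds (hlimmem.2 hφE))
    obtain ⟨k, hk1, hk2⟩ := (this.and (eventually_ge_atTop (n + 1))).exists
    exact (hev k hk2).1 ((hmem k).1 hk1)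
  · intro hk
    refine hlimmem.1 (hclopen.isClosed.mem_of_tendsto hm ?_)
    filter_upwards [eventually_ge_atTop (n + 1)] with k hk'
    exact (hmem k).2 ((hev k hk').2 hk)

end Construction

end GlimmEffros

/-- The Harrington–Kechris–Louveau dichotomy: a Borel equivalence relation on a Polish space
is either smooth, or Borel-above `E₀`. -/
theorem harrington_kechris_louveau
    (X : Type) [TopologicalSpace X] [PolishSpace X] [MeasurableSpace X] [BorelSpace X]
    (E : X → X → Prop) (hE : Equivalence E)
    (hBorel : MeasurableSet {p : X × X | E p.1 p.2}) :
    (∃ S : X → ℝ, Measurable S ∧ ∀ x₁ x₂ : X, E x₁ x₂ ↔ S x₁ = S x₂) ∨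
    (∃ φ : (ℕ → Bool) → X, Measurable φ ∧ ∀ f g : ℕ → Bool, E0 f g ↔ E (φ f) (φ g)) := by
  refine or_iff_not_imp_left.2 fun hns => ?_
  obtain ⟨kind, p, q, hp, hpq⟩ := GlimmEffros.exists_schedule
  obtain ⟨φ, hφ, hedge⟩ := GlimmEffros.exists_edge_hom hE hBorel hns kind p q
  have hR : Equivalence fun x y => E (φ x) (φ y) :=
    ⟨fun x => hE.refl _, fun h => hE.symm h, fun h h' => hE.trans h h'⟩
  have hres := GlimmEffros.mem_residual_of_edges (R := fun x y => E (φ x) (φ y))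
    ((hφ.prodMap hφ) hBorel) (fun x y z h h' => hE.trans h (hE.symm h')) fun a m => by
      obtain ⟨n, hn, hk, hpa⟩ := hp a m
      refine ⟨n, hn, p n, hpa, fun x y hx hy hxn hyn hxy h => ?_⟩
      have := (hedge n x y hx (by simpa [hk] using hy) hxn hyn hxy).1 h
      simp [hk] at this
  obtain ⟨ψ, hψ, h⟩ := GlimmEffros.exists_reduction_of_residual hR hres fun a b m => by
    obtain ⟨n, hn, hk, hpa, hqb⟩ := hpq a b m
    exact ⟨n, hn, p n, q n, hpa, hqb, fun x y hx hy hxn hyn hxy =>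
      (hedge n x y hx (by simpa [hk] using hy) hxn hyn hxy).2 hk⟩
  exact ⟨φ ∘ ψ, hφ.comp hψ, h⟩
end

section
/- E₀ is Borel reducible to =⁺, but =⁺ is not Borel reducible to E₀: there exists a Borel measurable φ : (ℕ → Bool) → (ℕ → ℝ) such that f E₀ g ↔ φ f =⁺ φ g for all f, g; and there is no Borel measurable ψ : (ℕ → ℝ) → (ℕ → Bool) such that x =⁺ y ↔ ψ x E₀ ψ y for all x, y. -/
/-- The equivalence relation `=⁺` on `ℕ → ℝ`: two sequences are equivalent iff they
enumerate the same set of reals. -/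
def EqPlus (x y : ℕ → ℝ) : Prop := Set.range x = Set.range y

/-- The equivalence relation `E₀` is Borel reducible to `=⁺`: send `f` to an enumeration of
its `E₀`-class, with Cantor space embedded in the reals. -/
theorem exists_measurable_reduction_E0_EqPlus :
    ∃ φ : (ℕ → Bool) → (ℕ → ℝ), Measurable φ ∧
      ∀ f g : ℕ → Bool, E0 f g ↔ EqPlus (φ f) (φ g) := by
  obtain ⟨e, he⟩ := exists_surjective_nat (Finset ℕ)
  have hemb := MeasureTheory.measurableEmbedding_embeddingReal (ℕ → Bool)
  set emb := MeasureTheory.embeddingReal (ℕ → Bool)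
  let flip : (ℕ → Bool) → ℕ → ℕ → Bool := fun f n i => xor (f i) (decide (i ∈ e n))
  refine ⟨fun f n => emb (flip f n), ?_, fun f g => ⟨?_, ?_⟩⟩
  · refine measurable_pi_iff.2 fun n => hemb.measurable.comp (measurable_pi_iff.2 fun i => ?_)
    exact (measurable_of_countable fun b => xor b (decide (i ∈ e n))).comp (measurable_pi_apply i)
  · have key : ∀ f g : ℕ → Bool, E0 f g →
        Set.range (fun n => emb (flip f n)) ⊆ Set.range (fun n => emb (flip g n)) := by
      rintro f g ⟨N, hN⟩ _ ⟨n, rfl⟩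
      obtain ⟨m, hm⟩ := he ((Finset.range N ∪ e n).filter fun i => g i ≠ flip f n i)
      refine ⟨m, congrArg emb (funext fun i => ?_)⟩
      by_cases hi : i ∈ Finset.range N ∪ e n
      · simp only [flip, hm, Finset.mem_filter, hi, true_and]
        cases g i <;> cases f i <;> by_cases h : i ∈ e n <;> simp [h]
      · have h1 : N ≤ i ∧ i ∉ e n := by simpa using hi
        simp only [flip, hm, Finset.mem_filter, hi, false_and, h1.2, hN i h1.1]
    intro h
    exact (key f g h).antisymm (key g f (h.imp fun N hN n hn => (hN n hn).symm))
  · intro h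
    obtain ⟨n, hn⟩ := he ∅
    have hmem : emb (flip f n) ∈ Set.range fun n => emb (flip g n) :=
      (show Set.range (fun n => emb (flip f n)) = _ from h) ▸ Set.mem_range_self n
    obtain ⟨m, hm⟩ := hmem
    refine ⟨(e m).sup id + 1, fun i hi => ?_⟩
    have h1 : i ∉ e m := fun h => by
      have : i ≤ (e m).sup id := Finset.le_sup (f := id) h
      omega
    simpa [flip, hn, h1] using (congrFun (hemb.injective hm) i).symm

section Generic

variable {α : Type*}

/-- The list of the first `n` values of `x`. -/
def initSeg (x : ℕ → α) (n : ℕ) : List α := (List.range n).map x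

@[simp]
theorem length_initSeg (x : ℕ → α) (n : ℕ) : (initSeg x n).length = n := by simp [initSeg]

/-- `x` passes through the finite sequence `t`. -/
def Extends (x : ℕ → α) (t : List α) : Prop := initSeg x t.length = t

theorem extends_initSeg (x : ℕ → α) (n : ℕ) : Extends x (initSeg x n) := by simp [Extends]

theorem exists_initSeg_eq_append (x : ℕ → α) {m n : ℕ} (h : m ≤ n) :
    ∃ u, initSeg x n = initSeg x m ++ u := by
  obtain ⟨k, rfl⟩ := Nat.exists_eq_add_of_le h
  exact ⟨_, by simp only [initSeg, List.range_add, List.map_append]; rfl⟩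

theorem Extends.of_append {x : ℕ → α} {t u : List α} (h : Extends x (t ++ u)) : Extends x t := by
  obtain ⟨v, hv⟩ := exists_initSeg_eq_append x (m := t.length) (n := (t ++ u).length) (by simp)
  rw [Extends] at h
  rw [h] at hv
  exact (List.append_inj_left hv (by simp)).symm

theorem Extends.exists_initSeg_eq_append {x : ℕ → α} {t : List α} (h : Extends x t) {n : ℕ}
    (hn : t.length ≤ n) : ∃ u, initSeg x n = t ++ u := by
  obtain ⟨u, hu⟩ := _root_.exists_initSeg_eq_append x hn
  exact ⟨u, by rw [hu, h]⟩

/-- `x` has an initial segment in each of the sets `D i`. -/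
def MeetsAll {ι : Type*} (D : ι → Set (List α)) (x : ℕ → α) : Prop := ∀ i, ∃ n, initSeg x n ∈ D i

/-- Every finite sequence has an end-extension in `D`. -/
def DenseBelow (D : Set (List α)) : Prop := ∀ t, ∃ u, t ++ u ∈ D

/-- Each measurable set of sequences is relatively clopen, for the product of the discrete
topologies, on the set of sequences meeting countably many suitable dense sets. -/
theorem exists_dense_decide [MeasurableSpace α] {S : Set (ℕ → α)} (hS : MeasurableSet S) :
    ∃ D : ℕ → Set (List α), (∀ i, DenseBelow (D i)) ∧ ∀ x, MeetsAll D x →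
      ∃ n, ∀ y, MeetsAll D y → Extends y (initSeg x n) → (y ∈ S ↔ x ∈ S) := by
  have hS' := MeasurableSpace.measurableSet_iSup.1 hS
  clear hS
  induction hS' with
  | basic S hC =>
    obtain ⟨i, T, -, rfl⟩ := hC
    refine ⟨fun _ => Set.univ, fun _ t => ⟨[], trivial⟩, fun x _ => ⟨i + 1, fun y _ hy => ?_⟩⟩
    have : y i = x i := by
      have := congrArg (fun l : List α => l[i]?) hy
      simpa [initSeg] using this
    simp [this]
  | empty => exact ⟨fun _ => Set.univ, fun _ t => ⟨[], trivial⟩, fun x _ => ⟨0, by simp⟩⟩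
  | compl S _ ih =>
    obtain ⟨D, hD, h⟩ := ih
    refine ⟨D, hD, fun x hx => ?_⟩
    obtain ⟨n, hn⟩ := h x hx
    exact ⟨n, fun y hy hxy => not_congr (hn y hy hxy)⟩
  | iUnion S _ ih =>
    choose D hD h using ih
    let E : ℕ × ℕ → Set (List α) := fun p => D p.1 p.2
    have hE : ∀ {y}, MeetsAll E y → ∀ j, MeetsAll (D j) y := fun hy j i => hy (j, i)
    let T : Set (List α) := {t | ∃ j, ∀ y, MeetsAll E y → Extends y t → y ∈ S j}
    let W : Set (List α) := {t | t ∈ T ∨ ∀ u, t ++ u ∉ T}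
    obtain ⟨e, he⟩ := exists_surjective_nat (Option (ℕ × ℕ))
    let F : Option (ℕ × ℕ) → Set (List α) := fun o => o.elim W E
    have hF : ∀ {y}, MeetsAll (F ∘ e) y → ∀ o, ∃ n, initSeg y n ∈ F o := fun hy o => by
      obtain ⟨i, rfl⟩ := he o
      exact hy i
    have hFE : ∀ {y}, MeetsAll (F ∘ e) y → MeetsAll E y := fun hy p => hF hy (some p)
    refine ⟨F ∘ e, fun i => ?_, fun x hx => ?_⟩
    · show DenseBelow (F (e i))
      cases e i with
      | some p => exact hD p.1 p.2
      | none =>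
        intro t
        by_cases ht : ∃ u, t ++ u ∈ T
        · exact ht.imp fun u hu => Or.inl hu
        · exact ⟨[], Or.inr (by simpa using ht)⟩
    · obtain ⟨n, hn⟩ := hF hx none
      refine ⟨n, fun y hy hxy => ?_⟩
      rcases hn with ⟨j, hj⟩ | hn
      · exact iff_of_true (Set.mem_iUnion.2 ⟨j, hj y (hFE hy) hxy⟩)
          (Set.mem_iUnion.2 ⟨j, hj x (hFE hx) (extends_initSeg x n)⟩)
      · have key : ∀ z, MeetsAll (F ∘ e) z → Extends z (initSeg x n) → z ∉ ⋃ j, S j := by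
          intro z hz hxz hmem
          obtain ⟨j, hj⟩ := Set.mem_iUnion.1 hmem
          obtain ⟨m, hm⟩ := h j z (hE (hFE hz) j)
          obtain ⟨u, hu⟩ := hxz.exists_initSeg_eq_append (le_max_right m (initSeg x n).length)
          obtain ⟨v, hv⟩ := exists_initSeg_eq_append z (le_max_left m (initSeg x n).length)
          refine hn u (hu ▸ ⟨j, fun w hw hzw => (hm w (hE hw j) ?_).2 hj⟩)
          rw [hv] at hzw
          exact hzw.of_append
        exact iff_of_false (key y hy hxy) (key x hx (extends_initSeg x n))

/-- Every finite sequence of elements of `A` that has an end-extension in `E` has one whose new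
terms all lie in `A`. -/
def Reflects (A : Set α) (E : Set (List α)) : Prop :=
  ∀ t, (∀ a ∈ t, a ∈ A) → (∃ u, t ++ u ∈ E) → ∃ u, (∀ a ∈ u, a ∈ A) ∧ t ++ u ∈ E

/-- A downward Löwenheim–Skolem argument: countably many sets of finite sequences are
simultaneously reflected by arbitrarily large countable sets. -/
theorem exists_countable_reflects {ι : Type*} [Countable ι] (E : ι → Set (List α)) {A₀ : Set α}
    (hA₀ : A₀.Countable) : ∃ A, A₀ ⊆ A ∧ A.Countable ∧ ∀ i, Reflects A (E i) := by
  have hw : ∀ (i : ι) (t : List α), ∃ u, (∃ u, t ++ u ∈ E i) → t ++ u ∈ E i := fun i t => by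
    by_cases h : ∃ u, t ++ u ∈ E i
    · exact h.imp fun u hu _ => hu
    · exact ⟨[], fun h' => absurd h' h⟩
  choose w hw using hw
  let step : Set α → Set α := fun B =>
    B ∪ ⋃ i, ⋃ t ∈ {t : List α | ∀ a ∈ t, a ∈ B}, {a | a ∈ w i t}
  let B : ℕ → Set α := fun n => step^[n] A₀
  have hB : ∀ n, B (n + 1) = step (B n) := fun n => Function.iterate_succ_apply' step n A₀
  have hmono : Monotone B := monotone_nat_of_le_succ fun n => by
    rw [hB]
    exact Set.subset_union_left
  refine ⟨⋃ n, B n, Set.subset_iUnion B 0, Set.countable_iUnion fun n => ?_, fun i t ht hu => ?_⟩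
  · induction n with
    | zero => exact hA₀
    | succ n ih =>
      rw [hB]
      refine ih.union (Set.countable_iUnion fun i => Set.Countable.biUnion ?_ fun t _ =>
        (List.finite_toSet (w i t)).countable)
      have := ih.to_subtype
      refine (Set.countable_range (List.map ((↑) : B n → α))).mono fun t ht => ?_
      rw [Set.range_list_map_coe]
      exact ht
  · have hn : ∃ n, ∀ a ∈ t, a ∈ B n := by
      clear hu
      induction t with
      | nil => exact ⟨0, by simp⟩
      | cons b t ih =>
        obtain ⟨n, hn⟩ := ih fun a ha => ht a (List.mem_cons_of_mem b ha)
        obtain ⟨m, hm⟩ := Set.mem_iUnion.1 (ht b List.mem_cons_self)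
        refine ⟨max m n, fun a ha => ?_⟩
        rcases List.mem_cons.1 ha with rfl | ha
        · exact hmono (le_max_left m n) hm
        · exact hmono (le_max_right m n) (hn a ha)
    obtain ⟨n, hn⟩ := hn
    refine ⟨w i t, fun a ha => Set.mem_iUnion.2 ⟨n + 1, ?_⟩, hw i t hu⟩
    rw [hB]
    exact Or.inr (Set.mem_iUnion.2 ⟨i, Set.mem_biUnion (show t ∈ {t | ∀ a ∈ t, a ∈ B n} from hn) ha⟩)

theorem extends_iff_forall_getElem {x : ℕ → α} {t : List α} :
    Extends x t ↔ ∀ i (h : i < t.length), t[i] = x i := by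
  refine ⟨fun h i hi => ?_, fun h => List.ext_getElem (by simp) fun i _ hi => ?_⟩
  · have := congrArg (fun l : List α => l[i]?) h
    simpa [initSeg, hi, eq_comm] using this
  · simp [initSeg, h i hi]

/-- Every finite sequence of elements of `A` has an end-extension in `D` with new terms in `A`. -/
def DenseOver (A : Set α) (D : Set (List α)) : Prop :=
  ∀ t, (∀ a ∈ t, a ∈ A) → ∃ u, (∀ a ∈ u, a ∈ A) ∧ t ++ u ∈ D

theorem Reflects.denseOver {A : Set α} {D : Set (List α)} (h : Reflects A D) (hD : DenseBelow D) :
    DenseOver A D := fun t ht => h t ht (hD t)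

/-- The Rasiowa–Sikorski lemma for finite sequences from a countable set `A`; the generic sequence
enumerates `A`. -/
theorem exists_meetsAll_range_eq {ι : Type*} [Countable ι] {A : Set α} (hA : A.Countable)
    (hne : A.Nonempty) {D : ι → Set (List α)} (hD : ∀ i, DenseOver A (D i)) {s : List α}
    (hs : ∀ a ∈ s, a ∈ A) : ∃ x, Extends x s ∧ MeetsAll D x ∧ Set.range x = A := by
  obtain ⟨a₀, ha₀⟩ := hne
  have := hA.to_subtype
  have : Nonempty A := ⟨⟨a₀, ha₀⟩⟩
  obtain ⟨e, he⟩ := exists_surjective_nat (ι ⊕ A)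
  let F : ι ⊕ A → Set (List α) := Sum.elim D fun a => {t | a.1 ∈ t}
  have hF : ∀ n, DenseOver A (F (e n)) := fun n => by
    cases e n with
    | inl i => exact hD i
    | inr a => exact fun t _ => ⟨[a.1], by simp, by simp [F]⟩
  choose u huA huF using hF
  let T : ℕ → {t : List α // ∀ a ∈ t, a ∈ A} := fun n => n.rec ⟨s, hs⟩ fun n t =>
    ⟨(t.1 ++ u n t.1 t.2) ++ [a₀], fun a ha => by
      simp only [List.mem_append, List.mem_singleton] at ha
      rcases ha with (ha | ha) | rfl
      exacts [t.2 a ha, huA n t.1 t.2 a ha, ha₀]⟩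
  have hT : ∀ n, (T (n + 1)).1 = ((T n).1 ++ u n (T n).1 (T n).2) ++ [a₀] := fun n => rfl
  have hpre : ∀ {m n}, m ≤ n → (T m).1 <+: (T n).1 := fun {m n} h => by
    induction n, h using Nat.le_induction with
    | base => exact List.prefix_rfl
    | succ n _ ih =>
      rw [hT, List.append_assoc]
      exact ih.trans (List.prefix_append _ _)
  have hlen : ∀ n, n ≤ (T n).1.length := fun n => by
    induction n with
    | zero => exact Nat.zero_le _
    | succ n ih => simp only [hT, List.length_append, List.length_singleton]; omega
  let x : ℕ → α := fun i => (T (i + 1)).1[i]'(hlen (i + 1))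
  have hx : ∀ n, Extends x (T n).1 := fun n => extends_iff_forall_getElem.2 fun i hi => by
    rcases le_total n (i + 1) with h | h
    · exact (hpre h).getElem hi
    · exact ((hpre h).getElem (hlen (i + 1))).symm
  have hmeet : ∀ j, ∃ n, initSeg x n ∈ F j := fun j => by
    obtain ⟨n, rfl⟩ := he j
    have h : Extends x ((T n).1 ++ u n (T n).1 (T n).2) := by
      have := hx (n + 1)
      rw [hT] at this
      exact this.of_append
    exact ⟨_, h.symm ▸ huF n (T n).1 (T n).2⟩
  refine ⟨x, hx 0, fun i => hmeet (Sum.inl i), Set.Subset.antisymm ?_ fun a ha => ?_⟩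
  · rintro _ ⟨i, rfl⟩
    exact (T (i + 1)).2 _ (List.getElem_mem _)
  · obtain ⟨n, hn⟩ := hmeet (Sum.inr ⟨a, ha⟩)
    obtain ⟨i, -, hi⟩ := List.mem_map.1 (show a ∈ (List.range n).map x from hn)
    exact ⟨i, hi⟩

/-- For a measurable map from sequences over an uncountable alphabet to Cantor space that is
`E₀`-invariant under change of enumeration, some two sequences enumerating different sets have
`E₀`-equivalent images. -/
theorem exists_range_ne_and_E0 [MeasurableSpace α] [Uncountable α] {ψ : (ℕ → α) → ℕ → Bool}
    (hψ : Measurable ψ) (hinv : ∀ x y, Set.range x = Set.range y → E0 (ψ x) (ψ y)) :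
    ∃ x y, Set.range x ≠ Set.range y ∧ E0 (ψ x) (ψ y) := by
  choose D hD hdec using fun k => exists_dense_decide
    (S := {x | ψ x k = true}) ((measurable_pi_iff.1 hψ k) (measurableSet_singleton true))
  let G : ℕ × ℕ → Set (List α) := fun p => D p.1 p.2
  let U : ℕ × Bool → Set (List α) := fun p =>
    {t | ∀ y, MeetsAll G y → Extends y t → ψ y p.1 = p.2}
  have hU : ∀ {x s}, MeetsAll G x → Extends x s → ∀ k, ∃ u, s ++ u ∈ U (k, ψ x k) := by
    intro x s hx hs k
    obtain ⟨n, hn⟩ := hdec k x fun i => hx (k, i)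
    obtain ⟨u, hu⟩ := hs.exists_initSeg_eq_append (le_max_right n s.length)
    obtain ⟨v, hv⟩ := exists_initSeg_eq_append x (le_max_left n s.length)
    refine ⟨u, fun y hy hyx => ?_⟩
    rw [← hu, hv] at hyx
    exact Bool.eq_iff_iff.2 (hn y (fun i => hy (k, i)) hyx.of_append)
  let a₀ : α := Classical.arbitrary α
  obtain ⟨A, hA₀, hA, hAr⟩ := exists_countable_reflects (Sum.elim G U) (Set.countable_singleton a₀)
  have hAG : ∀ p, DenseOver A (G p) := fun p => (hAr (Sum.inl p)).denseOver (hD p.1 p.2)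
  have hAne : A.Nonempty := ⟨a₀, hA₀ rfl⟩
  -- Some condition `s` decides all but finitely many digits of the image.
  obtain ⟨s, hsA, N, hs⟩ : ∃ s : List α, (∀ a ∈ s, a ∈ A) ∧ ∃ N, ∀ k, N ≤ k → ∀ b c,
      (∃ u, s ++ u ∈ U (k, b)) → (∃ u, s ++ u ∈ U (k, c)) → b = c := by
    by_contra! hcon
    obtain ⟨x, -, hxG, hxA⟩ := exists_meetsAll_range_eq hA hAne hAG (s := []) (by simp)
    let V : ℕ → Set (List α) := fun N => {t | ∃ k, N ≤ k ∧ t ∈ U (k, !ψ x k)}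
    have hV : ∀ N, DenseOver A (V N) := fun N t ht => by
      obtain ⟨k, hk, b, c, hb, hc, hbc⟩ := hcon t ht N
      have : ∃ u, t ++ u ∈ U (k, !ψ x k) := by
        by_cases h : b = !ψ x k
        · exact h ▸ hb
        · have : c = !ψ x k := by revert hbc h; cases b <;> cases c <;> cases ψ x k <;> simp
          exact this ▸ hc
      obtain ⟨u, huA, hu⟩ := hAr (Sum.inr (k, !ψ x k)) t ht this
      exact ⟨u, huA, k, hk, hu⟩
    obtain ⟨y, -, hy, hyA⟩ := exists_meetsAll_range_eq hA hAne (D := Sum.elim G V)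
      (Sum.forall.2 ⟨hAG, hV⟩) (s := []) (by simp)
    obtain ⟨N, hN⟩ := hinv x y (hxA.trans hyA.symm)
    obtain ⟨n, k, hk, hn⟩ := hy (Sum.inr N)
    have := hn y (fun p => hy (Sum.inl p)) (extends_initSeg y n)
    simp [hN k hk] at this
  obtain ⟨a, ha⟩ : ∃ a, a ∉ A := by
    by_contra! h
    exact Set.not_countable_univ (hA.mono fun a _ => h a)
  obtain ⟨B, hB₀, hB, hBr⟩ := exists_countable_reflects G (hA.insert a)
  obtain ⟨x, hxs, hxG, hxA⟩ := exists_meetsAll_range_eq hA hAne hAG hsA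
  obtain ⟨y, hys, hyG, hyB⟩ := exists_meetsAll_range_eq hB ⟨a, hB₀ (Set.mem_insert a A)⟩
    (fun p => (hBr p).denseOver (hD p.1 p.2))
    (fun b hb => hB₀ (Set.mem_insert_of_mem a (hsA b hb)))
  refine ⟨x, y, fun h => ha ?_, N, fun k hk => hs k hk _ _ (hU hxG hxs k) (hU hyG hys k)⟩
  rw [← hxA, h, hyB]
  exact hB₀ (Set.mem_insert a A)


end Generic

/-- `E₀` is Borel reducible to `=⁺`, but `=⁺` is not Borel reducible to `E₀`. -/
theorem E0_reducible_to_eqPlus_not_conversely :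
    (∃ φ : (ℕ → Bool) → (ℕ → ℝ), Measurable φ ∧
      ∀ f g : ℕ → Bool, E0 f g ↔ EqPlus (φ f) (φ g)) ∧
    ¬ ∃ ψ : (ℕ → ℝ) → (ℕ → Bool), Measurable ψ ∧
      ∀ x y : ℕ → ℝ, EqPlus x y ↔ E0 (ψ x) (ψ y) := by
  refine ⟨exists_measurable_reduction_E0_EqPlus, ?_⟩
  rintro ⟨ψ, hψ, h⟩
  obtain ⟨x, y, hne, hxy⟩ := exists_range_ne_and_E0 hψ fun x y hxy => (h x y).1 hxy
  exact hne ((h x y).2 hxy)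
end

section
/- Dougherty–Jackson–Kechris maximality of E(F₂, 2^ℕ): let F₂ = FreeGroup (Fin 2), let Z = F₂ → (ℕ → Bool) with the product topology (a Polish space), and let E∞ be the orbit equivalence relation of the shift action of F₂ on Z, where (γ · x)(δ) = x(γ⁻¹ * δ). Then for every Polish space Y and every equivalence relation F on Y that is Borel as a subset of Y × Y and has all classes countable, F is Borel reducible to E∞: there is a Borel measurable φ : Y → Z with y₁ F y₂ ↔ (∃ γ ∈ F₂, γ · φ y₁ = φ y₂) for all y₁, y₂. -/
/-- The shift action of the free group `F₂` on `F₂ → (ℕ → Bool)`: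
`(γ · x)(δ) = x (γ⁻¹ * δ)`. -/
def ShiftAct (γ : FreeGroup (Fin 2)) (x : FreeGroup (Fin 2) → (ℕ → Bool)) :
    FreeGroup (Fin 2) → (ℕ → Bool) :=
  fun δ => x (γ⁻¹ * δ)

open Set Filter Topology MeasureTheory

/-- A Borel form of reflection: an analytic set on which a continuous map `π` is injective
is contained in a Borel set on which `π` is injective. -/
theorem exists_measurableSet_superset_injOn {C X : Type*} [TopologicalSpace C] [PolishSpace C]
    [MeasurableSpace C] [BorelSpace C] [TopologicalSpace X] [T2Space X] {π : C → X}
    (hπ : Continuous π) {A : Set C} (hA : AnalyticSet A) (hinj : InjOn π A) :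
    ∃ B, A ⊆ B ∧ MeasurableSet B ∧ InjOn π B := by
  let G : Set C → Set C := fun A => Prod.snd '' {p : C × C | p.1 ∈ A ∧ p.1 ≠ p.2 ∧ π p.1 = π p.2}
  have hG : ∀ A, AnalyticSet A → AnalyticSet (G A) := fun A hA => by
    have hE : MeasurableSet {p : C × C | p.1 ≠ p.2 ∧ π p.1 = π p.2} :=
      (isOpen_ne_fun continuous_fst continuous_snd).measurableSet.inter
        (isClosed_eq (hπ.comp continuous_fst) (hπ.comp continuous_snd)).measurableSet
    have h : AnalyticSet (⋂ b : Bool, cond b (Prod.fst ⁻¹' A)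
        {p : C × C | p.1 ≠ p.2 ∧ π p.1 = π p.2}) :=
      AnalyticSet.iInter (Bool.forall_bool.2 ⟨hE.analyticSet, hA.preimage continuous_fst⟩)
    rw [← inter_eq_iInter] at h
    exact h.image_of_continuous continuous_snd
  obtain ⟨B, hAB, hB, hBm⟩ := hA.measurablySeparable (hG A hA) <| by
    rw [Set.disjoint_right]
    rintro _ ⟨⟨x, y⟩, ⟨hx, hxy, h⟩, rfl⟩ hy
    exact hxy (hinj hx hy h)
  obtain ⟨B', hAB', hB', hBm'⟩ := hA.measurablySeparable (hG B hBm.analyticSet) <| by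
    rw [Set.disjoint_right]
    rintro _ ⟨⟨x, y⟩, ⟨hx, hxy, h⟩, rfl⟩ hy
    exact Set.disjoint_left.1 hB ⟨(y, x), ⟨hy, hxy.symm, h.symm⟩, rfl⟩ hx
  refine ⟨B ∩ B', subset_inter hAB hAB', hBm.inter hBm', ?_⟩
  intro x hx y hy h
  by_contra hxy
  exact Set.disjoint_left.1 hB' ⟨(x, y), ⟨hx.1, hxy, h⟩, rfl⟩ hy.2

/-- A set is `π`-small if it is a countable union of Borel sets on which `π` is injective. -/
def IsInjSmall {C X : Type*} [MeasurableSpace C] (π : C → X) (D : Set C) : Prop :=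
  ∃ 𝓑 : Set (Set C), 𝓑.Countable ∧ (∀ B ∈ 𝓑, MeasurableSet B ∧ InjOn π B) ∧ D = ⋃₀ 𝓑

namespace IsInjSmall

variable {C X : Type*} [MeasurableSpace C] {π : C → X}

theorem of_injOn {B : Set C} (hB : MeasurableSet B) (h : InjOn π B) : IsInjSmall π B :=
  ⟨{B}, countable_singleton B, by simp [hB, h], by simp⟩

theorem iUnion {ι : Type*} [Countable ι] {D : ι → Set C} (h : ∀ i, IsInjSmall π (D i)) :
    IsInjSmall π (⋃ i, D i) := by
  choose 𝓑 h𝓑 hinj hD using h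
  refine ⟨⋃ i, 𝓑 i, countable_iUnion h𝓑, ?_, ?_⟩
  · intro B hB
    obtain ⟨i, hi⟩ := mem_iUnion.1 hB
    exact hinj i B hi
  · rw [sUnion_iUnion]
    exact iUnion_congr hD

theorem union {D E : Set C} (hD : IsInjSmall π D) (hE : IsInjSmall π E) :
    IsInjSmall π (D ∪ E) := by
  rw [union_eq_iUnion]
  exact iUnion (Bool.forall_bool.2 ⟨hE, hD⟩)

theorem measurableSet {D : Set C} (hD : IsInjSmall π D) : MeasurableSet D := by
  obtain ⟨𝓑, h𝓑, hinj, rfl⟩ := hD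
  exact MeasurableSet.sUnion h𝓑 fun B hB => (hinj B hB).1

/-- If the whole space is small, it is partitioned by a measurable function to `ℕ` into pieces
on which `π` is injective. -/
theorem exists_measurable_nat (h : IsInjSmall π univ) :
    ∃ n : C → ℕ, Measurable n ∧ ∀ p q, n p = n q → π p = π q → p = q := by
  obtain ⟨𝓑, h𝓑, hinj, hU⟩ := h
  obtain ⟨B, hB⟩ := (h𝓑.insert ∅).exists_eq_range (insert_nonempty _ _)
  have hB' : ∀ i, MeasurableSet (B i) ∧ InjOn π (B i) := fun i => by
    have : B i ∈ insert ∅ 𝓑 := hB ▸ mem_range_self i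
    rcases this with h | h
    · simp [h]
    · exact hinj _ h
  have hcov : ∀ p, ∃ i, p ∈ B i := fun p => by
    obtain ⟨b, hb, hp⟩ := mem_sUnion.1 (hU ▸ mem_univ p)
    obtain ⟨i, rfl⟩ : b ∈ range B := hB ▸ mem_insert_of_mem _ hb
    exact ⟨i, hp⟩
  classical
  refine ⟨fun p => Nat.find (hcov p), measurable_find hcov fun i => (hB' i).1, ?_⟩
  intro p q hn h
  have hq := Nat.find_spec (hcov q)
  rw [← show Nat.find (hcov p) = Nat.find (hcov q) from hn] at hq
  exact (hB' _).2 (Nat.find_spec (hcov p)) hq h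

end IsInjSmall

/-- The points of `X` whose fibre under `π` meets every member of `S` outside `D`. -/
def commonImage {C X : Type*} (π : C → X) (D : Set C) (S : Finset (Set C)) : Set X :=
  {x | ∀ u ∈ S, ∃ c ∈ u, c ∉ D ∧ π c = x}

theorem commonImage_anti {C X : Type*} {π : C → X} {D D' : Set C} {S S' : Finset (Set C)}
    (hD : D ⊆ D') (hS : S ⊆ S') : commonImage π D' S' ⊆ commonImage π D S := fun _ hx u hu =>
  let ⟨c, hcu, hcD, hc⟩ := hx u (hS hu)
  ⟨c, hcu, fun h => hcD (hD h), hc⟩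

theorem analyticSet_commonImage {C X : Type*} [TopologicalSpace C] [PolishSpace C]
    [MeasurableSpace C] [BorelSpace C] [TopologicalSpace X] [T2Space X] {π : C → X}
    (hπ : Continuous π) {D : Set C} (hD : MeasurableSet D) {S : Finset (Set C)}
    (hS : ∀ u ∈ S, IsOpen u) (hne : S.Nonempty) : AnalyticSet (commonImage π D S) := by
  have : Nonempty S := hne.to_subtype
  have h : AnalyticSet (⋂ u : S, π '' ((u : Set C) \ D)) := AnalyticSet.iInter fun u =>
    ((hS u u.2).measurableSet.diff hD).analyticSet.image_of_continuous hπ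
  convert h using 1
  ext x
  simp [commonImage, and_assoc]

/-- There is a small set `D` such that no single member of a finite family of basic open sets
singles out one point in the fibres of its common image outside `D`. -/
theorem exists_isInjSmall_forall_not_injOn {C X : Type*} [TopologicalSpace C] [PolishSpace C]
    [MeasurableSpace C] [BorelSpace C] [TopologicalSpace X] [T2Space X] {π : C → X}
    (hπ : Continuous π) {𝓤 : Set (Set C)} (h𝓤 : 𝓤.Countable) (hopen : ∀ u ∈ 𝓤, IsOpen u) :
    ∃ D, IsInjSmall π D ∧ ∀ S : Finset (Set C), ↑S ⊆ 𝓤 → (commonImage π D S).Nonempty →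
      ∀ u ∈ S, ¬ InjOn π {c | c ∈ u ∧ c ∉ D ∧ π c ∈ commonImage π D S} := by
  have key : ∀ S : Finset (Set C), ∃ D, IsInjSmall π D ∧
      ∀ D', IsInjSmall π D' → commonImage π D' S = ∅ → commonImage π D S = ∅ := fun S => by
    by_cases h : ∃ D', IsInjSmall π D' ∧ commonImage π D' S = ∅
    · obtain ⟨D', hD', h⟩ := h
      exact ⟨D', hD', fun _ _ _ => h⟩
    · exact ⟨∅, .of_injOn .empty (injOn_empty π), fun D' hD' h' => (h ⟨D', hD', h'⟩).elim⟩
  choose E hE hmin using key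
  have : Countable {S : Finset (Set C) // (S : Set (Set C)) ⊆ 𝓤} := by
    have := (Set.countable_ofPred_finite_subset h𝓤).preimage
      (Finset.coe_injective (α := Set C))
    refine (this.mono fun S hS => ?_).to_subtype
    exact ⟨S.finite_toSet, hS⟩
  let D := ⋃ S : {S : Finset (Set C) // (S : Set (Set C)) ⊆ 𝓤}, E S
  have hD : IsInjSmall π D := .iUnion fun S => hE S
  refine ⟨D, hD, fun S hS hne u hu hinj => ?_⟩
  have hT := analyticSet_commonImage hπ hD.measurableSet (S := S)
    (fun v hv => hopen v (hS hv)) ⟨u, hu⟩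
  have hA : AnalyticSet (⋂ b : Bool, cond b (u \ D) (π ⁻¹' commonImage π D S)) :=
    AnalyticSet.iInter (Bool.forall_bool.2 ⟨hT.preimage hπ,
      ((hopen _ (hS hu)).measurableSet.diff hD.measurableSet).analyticSet⟩)
  rw [← inter_eq_iInter] at hA
  obtain ⟨B, hAB, hBm, hB⟩ := exists_measurableSet_superset_injOn hπ hA
    (hinj.mono fun c hc => by exact ⟨hc.1.1, hc.1.2, hc.2⟩)
  have hempty : commonImage π (D ∪ B) S = ∅ := by
    rw [eq_empty_iff_forall_notMem]
    intro x hx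
    obtain ⟨c, hcu, hcD, rfl⟩ := hx u hu
    exact hcD (.inr (hAB ⟨⟨hcu, fun h => hcD (.inl h)⟩,
      commonImage_anti subset_union_left subset_rfl hx⟩))
  have := hmin S _ (hD.union (.of_injOn hBm hB)) hempty
  exact (hne.mono (commonImage_anti (subset_iUnion
    (fun S : {S : Finset (Set C) // (S : Set (Set C)) ⊆ 𝓤} => E S) ⟨S, hS⟩) subset_rfl)).ne_empty this

/-- A family of sets that can be refined avoiding any prescribed point, any two members of which
meet a common fibre of `π`, yields an uncountable fibre. -/
theorem exists_not_countable_fibre {C X : Type*} [MetricSpace C] [CompleteSpace C]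
    [TopologicalSpace X] [T2Space X] {π : C → X} (hπ : Continuous π) {𝓢 : Set (Set C)}
    (hne : 𝓢.Nonempty) (hpair : ∀ u ∈ 𝓢, ∀ v ∈ 𝓢, ∃ c ∈ u, ∃ d ∈ v, π c = π d)
    (hsplit : ∀ u ∈ 𝓢, ∀ (k : ℕ) (y : C), ∃ v ∈ 𝓢, closure v ⊆ u ∧ y ∉ closure v ∧
      ∀ a ∈ v, ∀ b ∈ v, dist a b ≤ 1 / (k + 1)) :
    ∃ x, ¬ (π ⁻¹' {x}).Countable := by
  choose! f hf𝓢 hfu hfy hfd using hsplit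
  obtain ⟨u₀, hu₀⟩ := hne
  have hlim : ∀ y : ℕ → C, ∃ (u : ℕ → Set C) (c : C), (∀ n, u n ∈ 𝓢) ∧ (∀ n, c ≠ y n) ∧
      ∀ a : ℕ → C, (∀ n, a n ∈ u n) → Tendsto a atTop (𝓝 c) := by
    intro y
    let u : ℕ → Set C := fun n => Nat.rec (f u₀ 0 (y 0)) (fun n v => f v (n + 1) (y (n + 1))) n
    have hu : ∀ n, ∃ v ∈ 𝓢, u n = f v n (y n) := by
      intro n
      induction n with
      | zero => exact ⟨u₀, hu₀, by simp [u]⟩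
      | succ n ih =>
        obtain ⟨v, hv, h⟩ := ih
        exact ⟨u n, h ▸ hf𝓢 _ hv _ _, by simp [u]⟩
    have hu𝓢 : ∀ n, u n ∈ 𝓢 := fun n => by
      obtain ⟨v, hv, h⟩ := hu n
      exact h ▸ hf𝓢 _ hv _ _
    have hanti : Antitone u := antitone_nat_of_succ_le fun n => by
      have := hfu _ (hu𝓢 n) (n + 1) (y (n + 1))
      exact subset_closure.trans this
    have hdist : ∀ N, ∀ a ∈ u N, ∀ b ∈ u N, dist a b ≤ 1 / ((N : ℝ) + 1) := fun N => by
      obtain ⟨v, hv, h⟩ := hu N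
      exact h ▸ hfd _ hv _ _
    have hnonempty : ∀ n, (u n).Nonempty := fun n => by
      obtain ⟨c, hc, -⟩ := hpair _ (hu𝓢 n) _ (hu𝓢 n)
      exact ⟨c, hc⟩
    choose p hp using hnonempty
    have hcauchy : CauchySeq p := cauchySeq_of_le_tendsto_0 (fun N : ℕ => 1 / ((N : ℝ) + 1))
      (fun n m N hn hm => hdist N _ (hanti hn (hp n)) _ (hanti hm (hp m)))
      tendsto_one_div_add_atTop_nhds_zero_nat
    obtain ⟨c, hc⟩ := cauchySeq_tendsto_of_complete hcauchy
    refine ⟨u, c, hu𝓢, fun n hcn => ?_, fun a ha => ?_⟩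
    · obtain ⟨v, hv, h⟩ := hu n
      apply hfy _ hv n (y n)
      rw [← h, ← hcn]
      exact mem_closure_of_tendsto hc (eventually_atTop.2 ⟨n, fun m hm => hanti hm (hp m)⟩)
    · refine (tendsto_iff_of_dist ?_).2 hc
      exact squeeze_zero (fun _ => dist_nonneg) (fun n => hdist n _ (ha n) _ (hp n))
        tendsto_one_div_add_atTop_nhds_zero_nat
  obtain ⟨c₀, -⟩ := hpair _ hu₀ _ hu₀
  obtain ⟨u, c, hu, -, hc⟩ := hlim fun _ => c₀
  refine ⟨π c, fun hcount => ?_⟩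
  obtain ⟨y, hy⟩ := hcount.exists_eq_range ⟨c, rfl⟩
  obtain ⟨v, d, hv, hdy, hd⟩ := hlim y
  choose a ha b hb hab using fun n => hpair _ (hu n) _ (hv n)
  have hcd : π d = π c := tendsto_nhds_unique ((hπ.tendsto d).comp (hd b hb)) <| by
    refine ((hπ.tendsto c).comp (hc a ha)).congr hab
  obtain ⟨n, hn⟩ : d ∈ range y := hy ▸ hcd
  exact hdy n hn.symm

/-- **Lusin–Novikov**, for continuous maps between Polish spaces. -/
theorem isInjSmall_univ_of_countable_fibres {C X : Type*} [TopologicalSpace C] [PolishSpace C]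
    [MeasurableSpace C] [BorelSpace C] [TopologicalSpace X] [T2Space X] {π : C → X}
    (hπ : Continuous π) (hcount : ∀ x, (π ⁻¹' {x}).Countable) : IsInjSmall π univ := by
  classical
  let := TopologicalSpace.upgradeIsCompletelyMetrizable C
  let 𝓤 := TopologicalSpace.countableBasis C
  have h𝓤 : TopologicalSpace.IsTopologicalBasis 𝓤 := TopologicalSpace.isBasis_countableBasis C
  obtain ⟨D, hD, hninj⟩ := exists_isInjSmall_forall_not_injOn hπ
    (TopologicalSpace.countable_countableBasis C) (fun u hu => h𝓤.isOpen hu)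
  suffices D = univ from this ▸ hD
  by_contra hDne
  obtain ⟨c₀, hc₀⟩ := (ne_univ_iff_exists_notMem D).1 hDne
  let P := {S : Finset (Set C) // ↑S ⊆ 𝓤 ∧ (commonImage π D S).Nonempty}
  let IsSplit : Set C → ℕ → Set C → Set C → Prop := fun u k v w =>
    closure v ⊆ u ∧ closure w ⊆ u ∧ Disjoint (closure v) (closure w) ∧
      (∀ a ∈ v, ∀ b ∈ v, dist a b ≤ 1 / ((k : ℝ) + 1)) ∧
      (∀ a ∈ w, ∀ b ∈ w, dist a b ≤ 1 / ((k : ℝ) + 1))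
  have hsplit : ∀ (S : P) (u : Set C) (k : ℕ), u ∈ S.1 → ∃ S' : P, S ≤ S' ∧
      ∃ v ∈ S'.1, ∃ w ∈ S'.1, IsSplit u k v w := by
    rintro ⟨S, hS, hne⟩ u k hu
    have hn := hninj S hS hne u hu
    simp only [InjOn, not_forall] at hn
    obtain ⟨c, ⟨hcu, hcD, hc⟩, d, ⟨hdu, hdD, hd⟩, hcd, hne⟩ := hn
    have hk : (0 : ℝ) < 1 / ((k : ℝ) + 1) := by positivity
    have hsmall : ∀ c ∈ u, ∀ s : Set C, s ∈ 𝓝 c → ∃ v ∈ 𝓤, c ∈ v ∧ closure v ⊆ u ∧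
        closure v ⊆ s ∧ (∀ a ∈ v, ∀ b ∈ v, dist a b ≤ 1 / ((k : ℝ) + 1)) := by
      intro c hc s hs
      have hnhds : u ∩ s ∩ Metric.ball c (1 / ((k : ℝ) + 1) / 2) ∈ 𝓝 c :=
        inter_mem (inter_mem ((h𝓤.isOpen (hS hu)).mem_nhds hc) hs)
          (Metric.ball_mem_nhds c (half_pos hk))
      obtain ⟨t, ht, htc, hts⟩ := exists_mem_nhds_isClosed_subset hnhds
      obtain ⟨v, hv, hcv, hvt⟩ := h𝓤.mem_nhds_iff.1 ht
      have hcl : closure v ⊆ t := closure_minimal hvt htc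
      refine ⟨v, hv, hcv, fun a ha => (hts (hcl ha)).1.1, fun a ha => (hts (hcl ha)).1.2, ?_⟩
      intro a ha b hb
      have h1 := (hts (hvt ha)).2
      have h2 := (hts (hvt hb)).2
      rw [Metric.mem_ball] at h1 h2
      linarith [dist_triangle_right a b c]
    obtain ⟨s, t, hs, ht, hcs, hdt, hst⟩ := t2_separation hne
    obtain ⟨v, hv, hcv, hvu, hvs, hvd⟩ := hsmall c hcu s (hs.mem_nhds hcs)
    obtain ⟨w, hw, hdw, hwu, hwt, hwd⟩ := hsmall d hdu t (ht.mem_nhds hdt)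
    refine ⟨⟨insert v (insert w S), ?_, π c, ?_⟩, ?_, v, ?_, w, ?_, hvu, hwu,
      hst.mono hvs hwt, hvd, hwd⟩
    · simp [insert_subset_iff, hv, hw, hS]
    · intro z hz
      rcases Finset.mem_insert.1 hz with rfl | hz
      · exact ⟨c, hcv, hcD, rfl⟩
      rcases Finset.mem_insert.1 hz with rfl | hz
      · exact ⟨d, hdw, hdD, hcd.symm⟩
      · exact hc z hz
    · exact fun z hz => Finset.mem_insert_of_mem (Finset.mem_insert_of_mem hz)
    · simp
    · simp
  have : Countable 𝓤 := (TopologicalSpace.countable_countableBasis C).to_subtype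
  let := Encodable.ofCountable (𝓤 × ℕ)
  let 𝒟 : 𝓤 × ℕ → Order.Cofinal P := fun i =>
    { carrier := {S | (∃ v ∈ S.1, ∃ w ∈ S.1, IsSplit i.1 i.2 v w) ∨
        ∀ S' : P, S ≤ S' → (i.1 : Set C) ∉ S'.1}
      isCofinal := fun S => by
        by_cases h : ∃ S' : P, S ≤ S' ∧ (i.1 : Set C) ∈ S'.1
        · obtain ⟨S', hSS', hi⟩ := h
          obtain ⟨S'', hS'', h⟩ := hsplit S' i.1 i.2 hi
          exact ⟨S'', .inl h, hSS'.trans hS''⟩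
        · push Not at h
          exact ⟨S, .inr h, le_rfl⟩ }
  obtain ⟨u₀, hu₀, hcu₀, -⟩ := h𝓤.exists_subset_of_mem_open (mem_univ c₀) isOpen_univ
  let S₀ : P := ⟨{u₀}, by simpa using hu₀, π c₀, by
    intro u hu
    rw [Finset.mem_singleton.1 hu]
    exact ⟨c₀, hcu₀, hc₀, rfl⟩⟩
  let J := Order.idealOfCofinals S₀ 𝒟
  obtain ⟨x, hx⟩ := exists_not_countable_fibre hπ (𝓢 := {u | ∃ S ∈ J, u ∈ S.1})
    ⟨u₀, S₀, Order.mem_idealOfCofinals S₀ 𝒟, Finset.mem_singleton_self u₀⟩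
    (by
      rintro u ⟨S, hS, hu⟩ v ⟨S', hS', hv⟩
      obtain ⟨T, -, hST, hST'⟩ := J.directed S hS S' hS'
      obtain ⟨x, hx⟩ := T.2.2
      obtain ⟨c, hc, -, hcx⟩ := hx u (hST hu)
      obtain ⟨d, hd, -, hdx⟩ := hx v (hST' hv)
      exact ⟨c, hc, d, hd, hcx.trans hdx.symm⟩)
    (by
      rintro u ⟨S, hS, hu⟩ k y
      obtain ⟨S', hS', hJ⟩ := Order.cofinal_meets_idealOfCofinals S₀ 𝒟 (⟨u, S.2.1 hu⟩, k)
      rcases hS' with ⟨v, hv, w, hw, hvu, hwu, hvw, hvd, hwd⟩ | hS'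
      · by_cases hy : y ∈ closure v
        · exact ⟨w, ⟨S', hJ, hw⟩, hwu, Set.disjoint_left.1 hvw hy, hwd⟩
        · exact ⟨v, ⟨S', hJ, hv⟩, hvu, hy, hvd⟩
      · obtain ⟨T, -, hST, hST'⟩ := J.directed S hS S' hJ
        exact (hS' T hST' (hST hu)).elim)
  exact hx (hcount x)

/-- **Lusin–Novikov**: a countable-to-one measurable map from a standard Borel space is injective
on each piece of some countable Borel partition. -/
theorem Measurable.exists_measurable_nat_of_countable_fibres {C X : Type*} [MeasurableSpace C]
    [StandardBorelSpace C] [TopologicalSpace X] [T2Space X] [SecondCountableTopology X]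
    [MeasurableSpace X] [OpensMeasurableSpace X] {π : C → X} (hπ : Measurable π)
    (hcount : ∀ x, (π ⁻¹' {x}).Countable) :
    ∃ n : C → ℕ, Measurable n ∧ ∀ p q, n p = n q → π p = π q → p = q := by
  let τ := upgradeStandardBorel C
  obtain ⟨t', hle, hcont, hpolish⟩ := hπ.exists_continuous
  have hborel : @BorelSpace C t' _ :=
    @BorelSpace.mk C t' _ ((eq_borel_upgradeStandardBorel C).trans
      (borel_eq_borel_of_le hpolish τ.toPolishSpace hle).symm)
  exact (@isInjSmall_univ_of_countable_fibres C X t' hpolish _ hborel _ _ π hcont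
    hcount).exists_measurable_nat

/-- The involution exchanging `k (c, false)` and `k (c, true)` for all `c` and fixing every point
outside the range of the injection `k`. -/
noncomputable def swapAlong {C W : Type*} (k : C × Bool → W) (hk : Function.Injective k) :
    Equiv.Perm W :=
  Function.Involutive.toPerm (Function.extend k (fun p => k (p.1, !p.2)) id) fun w => by
    by_cases h : ∃ p, k p = w
    · obtain ⟨p, rfl⟩ := h
      simp [hk.extend_apply]
    · rw [Function.extend_apply' _ _ w h]
      exact Function.extend_apply' _ _ w h

theorem swapAlong_apply {C W : Type*} {k : C × Bool → W} (hk : Function.Injective k)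
    (p : C × Bool) : swapAlong k hk (k p) = k (p.1, !p.2) :=
  hk.extend_apply (fun p => k (p.1, !p.2)) id p

theorem swapAlong_of_notMem_range {C W : Type*} {k : C × Bool → W} (hk : Function.Injective k)
    {w : W} (hw : w ∉ range k) : swapAlong k hk w = w :=
  Function.extend_apply' (fun p : C × Bool => k (p.1, !p.2)) id w hw

theorem measurable_swapAlong {C W : Type*} [MeasurableSpace C] [StandardBorelSpace C]
    [MeasurableSpace W] [MeasurableSpace.CountablySeparated W] {k : C × Bool → W}
    (hk : Function.Injective k) (hm : Measurable k) : Measurable (swapAlong k hk) :=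
  (hm.measurableEmbedding hk).measurable_extend 
    (g := fun p => k (p.1, !p.2))
    (hm.comp (measurable_fst.prodMk ((measurable_of_countable not).comp measurable_snd)))
    measurable_id

/-- A countable Borel equivalence relation `F` on `Y` is induced, on the slice `Y × {0}`, by a
Borel action of the free group on two generators on `Y × ℤ`. -/
theorem exists_freeGroup_hom_perm (Y : Type*) [TopologicalSpace Y] [PolishSpace Y]
    [MeasurableSpace Y] [BorelSpace Y] (F : Y → Y → Prop) (hF : Equivalence F)
    (hBorel : MeasurableSet {p : Y × Y | F p.1 p.2})
    (hctble : ∀ y : Y, {y' : Y | F y y'}.Countable) :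
    ∃ ρ : FreeGroup (Fin 2) →* Equiv.Perm (Y × ℤ), (∀ γ, Measurable (ρ γ)) ∧
      (∀ γ w, F w.1 (ρ γ w).1) ∧ ∀ y₁ y₂, F y₁ y₂ → ∃ γ, ρ γ (y₁, 0) = (y₂, 0) := by
  let C := {p : Y × Y | F p.1 p.2}
  have : StandardBorelSpace C := hBorel.standardBorel
  have hfst : Measurable fun p : C => p.1.1 := measurable_fst.comp measurable_subtype_coe
  have hsnd : Measurable fun p : C => p.1.2 := measurable_snd.comp measurable_subtype_coe
  obtain ⟨n₁, hn₁, hinj₁⟩ := hfst.exists_measurable_nat_of_countable_fibres fun x => by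
    refine MapsTo.countable_of_injOn (f := fun p : C => p.1.2) ?_ ?_ (hctble x)
    · rintro p rfl
      exact p.2
    · intro p hp q hq h
      exact Subtype.ext (Prod.ext (hp.trans hq.symm) h)
  obtain ⟨n₂, hn₂, hinj₂⟩ := hsnd.exists_measurable_nat_of_countable_fibres fun x => by
    refine MapsTo.countable_of_injOn (f := fun p : C => p.1.1) ?_ ?_ (hctble x)
    · rintro p rfl
      exact hF.symm p.2
    · intro p hp q hq h
      exact Subtype.ext (Prod.ext h (hp.trans hq.symm))
  let n : C → ℕ := fun p => Nat.pair (n₁ p) (n₂ p)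
  have hn : Measurable n := 
    (measurable_of_countable fun q : ℕ × ℕ => Nat.pair q.1 q.2).comp (hn₁.prodMk hn₂)
  have hn₁' : ∀ p q, n p = n q → p.1.1 = q.1.1 → p = q := fun p q h =>
    hinj₁ p q (Nat.pair_eq_pair.1 h).1
  have hn₂' : ∀ p q, n p = n q → p.1.2 = q.1.2 → p = q := fun p q h =>
    hinj₂ p q (Nat.pair_eq_pair.1 h).2
  let k : C × Bool → Y × ℤ := fun p =>
    bif p.2 then (p.1.1.2, Int.negSucc (n p.1)) else (p.1.1.1, Int.ofNat (n p.1))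
  have hk : Function.Injective k := by
    rintro ⟨p, _ | _⟩ ⟨q, _ | _⟩ h
    · obtain ⟨h₁, h₂⟩ := Prod.mk.inj h
      rw [hn₁' p q (Int.ofNat.inj h₂) h₁]
    · simp [k] at h
    · simp [k] at h
    · obtain ⟨h₁, h₂⟩ := Prod.mk.inj h
      rw [hn₂' p q (Int.negSucc.inj h₂) h₁]
  have hkm : Measurable k := by
    refine measurable_from_prod_countable_left fun b => ?_
    cases b
    · exact hfst.prodMk (measurable_from_top.comp hn)
    · exact hsnd.prodMk (measurable_from_top.comp hn)
  let a : Equiv.Perm (Y × ℤ) := (Equiv.refl Y).prodCongr (Equiv.addRight 1)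
  let b : Equiv.Perm (Y × ℤ) := swapAlong k hk
  have ha : ∀ (m : ℕ) (y : Y) (j : ℤ), (a ^ m) (y, j) = (y, j + m) := by
    intro m y j
    induction m with
    | zero => simp
    | succ m ih => rw [pow_succ', Equiv.Perm.mul_apply, ih]; simp [a, add_assoc]
  have ham : Measurable a := measurable_fst.prodMk (measurable_from_top.comp measurable_snd)
  have ham' : Measurable a.symm := measurable_fst.prodMk (measurable_from_top.comp measurable_snd)
  have hbs : b.symm = b := rfl
  have hbm : Measurable b := measurable_swapAlong hk hkm
  have hbF : ∀ w, F w.1 (b w).1 := by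
    intro w
    by_cases hw : w ∈ range k
    · obtain ⟨⟨p, _ | _⟩, rfl⟩ := hw
      · rw [swapAlong_apply]
        exact p.2
      · rw [swapAlong_apply]
        exact hF.symm p.2
    · rw [swapAlong_of_notMem_range hk hw]
      exact hF.refl _
  let ρ : FreeGroup (Fin 2) →* Equiv.Perm (Y × ℤ) := FreeGroup.lift ![a, b]
  have hρ : ∀ γ, Measurable (ρ γ) ∧ ∀ w, F w.1 (ρ γ w).1 := by
    intro γ
    induction γ using FreeGroup.induction_on with
    | C1 => exact ⟨by simpa using measurable_id, fun w => by simpa using hF.refl _⟩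
    | of i =>
      fin_cases i
      · exact ⟨by simpa [ρ] using ham, fun w => by simpa [ρ, a] using hF.refl _⟩
      · exact ⟨by simpa [ρ] using hbm, fun w => by simpa [ρ] using hbF w⟩
    | inv_of i _ =>
      fin_cases i
      · exact ⟨by simpa [ρ] using ham', fun w => by simpa [ρ, a] using hF.refl _⟩
      · exact ⟨by simpa [ρ, hbs] using hbm, fun w => by simpa [ρ, hbs] using hbF w⟩
    | mul γ δ hγ hδ =>
      rw [map_mul]
      exact ⟨hγ.1.comp hδ.1, fun w => hF.trans (hδ.2 w) (hγ.2 _)⟩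
  refine ⟨ρ, fun γ => (hρ γ).1, fun γ => (hρ γ).2, fun y₁ y₂ h => ?_⟩
  let p : C := ⟨(y₁, y₂), h⟩
  refine ⟨.of 0 ^ (n p + 1) * .of 1 * .of 0 ^ n p, ?_⟩
  have hb : b (y₁, (n p : ℤ)) = (y₂, Int.negSucc (n p)) := swapAlong_apply hk (p, false)
  simp only [map_mul, map_pow, ρ, FreeGroup.lift_apply_of, Equiv.Perm.mul_apply,
    Matrix.cons_val_zero, Matrix.cons_val_one, ha, zero_add, hb]
  simp [Int.negSucc_eq]

/-- Dougherty–Jackson–Kechris: every countable Borel equivalence relation on a Polish space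
is Borel reducible to the orbit equivalence relation `E∞ = E(F₂, 2^ℕ)` of the shift action
of `F₂` on `F₂ → (ℕ → Bool)`. -/
theorem dougherty_jackson_kechris_E_infinity_maximal
    (Y : Type) [TopologicalSpace Y] [PolishSpace Y] [MeasurableSpace Y] [BorelSpace Y]
    (F : Y → Y → Prop) (hF : Equivalence F)
    (hBorel : MeasurableSet {p : Y × Y | F p.1 p.2})
    (hctble : ∀ y : Y, {y' : Y | F y y'}.Countable) :
    ∃ φ : Y → (FreeGroup (Fin 2) → (ℕ → Bool)), Measurable φ ∧
      ∀ y₁ y₂ : Y, F y₁ y₂ ↔ ∃ γ : FreeGroup (Fin 2), ShiftAct γ (φ y₁) = φ y₂ := by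
  obtain ⟨ρ, hm, hρF, hFρ⟩ := exists_freeGroup_hom_perm Y F hF hBorel hctble
  obtain ⟨c, hc, hinj⟩ :=
    MeasurableSpace.measurable_injection_nat_bool_of_countablySeparated (Y × ℤ)
  have hshift : ∀ γ y, ShiftAct γ (fun δ => c (ρ δ⁻¹ (y, 0))) =
      fun δ => c (ρ δ⁻¹ (ρ γ (y, 0))) := by
    intro γ y
    funext δ
    simp [ShiftAct]
  refine ⟨fun y δ => c (ρ δ⁻¹ (y, 0)), ?_, fun y₁ y₂ => ⟨fun h => ?_, ?_⟩⟩
  · exact measurable_pi_lambda _ fun δ => hc.comp ((hm δ⁻¹).comp measurable_prodMk_right)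
  · obtain ⟨γ, hγ⟩ := hFρ y₁ y₂ h
    exact ⟨γ, by rw [hshift, hγ]⟩
  · rintro ⟨γ, hγ⟩
    rw [hshift] at hγ
    have h : ρ γ (y₁, 0) = (y₂, 0) := by simpa using hinj (congrFun hγ 1)
    simpa [h] using hρF γ (y₁, 0)
end

section
/- Camerlo–Gao theorem: topological conjugacy of homeomorphisms of the Cantor set is Borel bireducible with isomorphism of countable graphs. Precisely, let K = ℕ → Bool, let P = {(f, g) ∈ C(K,K) × C(K,K) : g ∘ f = id ∧ f ∘ g = id} (a closed, hence Polish, subspace), and define conjugacy on P by (f, g) ∼ (f', g') iff there exists (h, h') ∈ P with h ∘ f = f' ∘ h. Let R be graph isomorphism on M = (ℕ × ℕ → Bool). Then there exist a Borel measurable Φ : M → P with x R y ↔ Φ x ∼ Φ y for all x, y ∈ M, and a Borel measurable Ψ : P → M with p ∼ q ↔ Ψ p R Ψ q for all p, q ∈ P. -/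
/-- The Cantor space. -/
abbrev CantorK : Type := ℕ → Bool

instance : MeasurableSpace C(CantorK, CantorK) := borel _
instance : BorelSpace C(CantorK, CantorK) := ⟨rfl⟩

/-- Homeomorphisms of the Cantor set, coded as mutually inverse pairs of continuous
self-maps; a closed subspace of `C(K,K) × C(K,K)`. -/
def CantorPairs : Set (C(CantorK, CantorK) × C(CantorK, CantorK)) :=
  {p | ⇑p.2 ∘ ⇑p.1 = id ∧ ⇑p.1 ∘ ⇑p.2 = id}

/-- Topological conjugacy of homeomorphisms of the Cantor set. -/
def ConjRel (p q : CantorPairs) : Prop :=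
  ∃ r : CantorPairs, ⇑r.1.1 ∘ ⇑p.1.1 = ⇑q.1.1 ∘ ⇑r.1.1

/-- Isomorphism of countable graphs, coded as points of `(ℕ × ℕ) → Bool`. -/
def GraphIso (x y : (ℕ × ℕ) → Bool) : Prop :=
  ∃ π : ℕ ≃ ℕ, ∀ i j : ℕ, x (π i, π j) = y (i, j)

open Set Filter Topology TopologicalSpace

/-- The homeomorphism coded by a mutually inverse pair. -/
def cantorPairHomeomorph (p : CantorPairs) : CantorK ≃ₜ CantorK where
  toFun := p.1.1
  invFun := p.1.2
  left_inv := congrFun p.2.1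
  right_inv := congrFun p.2.2
  continuous_toFun := p.1.1.continuous
  continuous_invFun := p.1.2.continuous

theorem conjRel_iff_exists_homeomorph (p q : CantorPairs) :
    ConjRel p q ↔ ∃ h : CantorK ≃ₜ CantorK,
      ∀ z, h (cantorPairHomeomorph p z) = cantorPairHomeomorph q (h z) := by
  constructor
  · rintro ⟨r, hr⟩
    exact ⟨cantorPairHomeomorph r, congrFun hr⟩
  · rintro ⟨h, hh⟩
    exact ⟨⟨(⟨h, h.continuous⟩, ⟨h.symm, h.symm.continuous⟩),
      funext h.symm_apply_apply, funext h.apply_symm_apply⟩, funext hh⟩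

section StoneDuality

variable {X Y : Type*} [TopologicalSpace X] [TopologicalSpace Y]

theorem exists_point_of_clopens_orderIso [CompactSpace Y]
    (α : Clopens X ≃o Clopens Y) (x : X) : ∃ y : Y, ∀ U : Clopens X, y ∈ α U ↔ x ∈ U := by
  have key : (⋂ U : {U : Clopens X // x ∈ U}, (α U.1 : Set Y)).Nonempty := by
    have : Nonempty {U : Clopens X // x ∈ U} := ⟨⟨⊤, mem_univ x⟩⟩
    refine IsCompact.nonempty_iInter_of_directed_nonempty_isCompact_isClosed _ ?_ ?_ ?_ ?_
    · intro U V
      exact ⟨⟨U.1 ⊓ V.1, U.2, V.2⟩, α.monotone inf_le_left, α.monotone inf_le_right⟩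
    · rintro ⟨U, hU⟩
      by_contra hne
      have hbot : α U = ⊥ := Clopens.ext (not_nonempty_iff_eq_empty.1 hne)
      rw [_root_.map_eq_bot_iff] at hbot
      subst hbot
      exact hU
    · exact fun U => (α U.1).isClosed.isCompact
    · exact fun U => (α U.1).isClosed
  obtain ⟨y, hy⟩ := key
  rw [mem_iInter] at hy
  refine ⟨y, fun U => ⟨fun hyU => ?_, fun hxU => hy ⟨U, hxU⟩⟩⟩
  by_contra hxU
  have hyc : y ∈ α Uᶜ := hy ⟨Uᶜ, hxU⟩
  have hdisj : α U ⊓ α Uᶜ = ⊥ := by rw [← InfHomClass.map_inf, inf_compl_eq_bot, BotHomClass.map_bot]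
  have hmem : y ∈ α U ⊓ α Uᶜ := ⟨hyU, hyc⟩
  rw [hdisj] at hmem
  exact hmem

variable [CompactSpace X] [T2Space X] [TotallyDisconnectedSpace X]

theorem eq_of_forall_mem_clopens {x y : X} (h : ∀ U : Clopens X, x ∈ U → y ∈ U) : x = y := by
  by_contra hne
  obtain ⟨U, hU, hxU, hUy⟩ := compact_exists_isClopen_in_isOpen
    (isOpen_compl_singleton (x := y)) (mem_compl_singleton_iff.2 hne)
  exact hUy (h ⟨U, hU⟩ hxU) rfl

theorem continuous_of_mem_clopens_iff {f : Y → X} (β : Clopens X → Clopens Y)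
    (h : ∀ U y, f y ∈ U ↔ y ∈ β U) : Continuous f := by
  refine isTopologicalBasis_isClopen.continuous_iff.2 fun U hU => ?_
  have : f ⁻¹' U = β ⟨U, hU⟩ := Set.ext fun y => h ⟨U, hU⟩ y
  exact this ▸ (β ⟨U, hU⟩).isOpen

/-- Order isomorphisms between algebras of clopen sets of Stone spaces are induced by
homeomorphisms. -/
theorem exists_homeomorph_of_clopens_orderIso [CompactSpace Y] [T2Space Y]
    [TotallyDisconnectedSpace Y] (α : Clopens X ≃o Clopens Y) :
    ∃ h : X ≃ₜ Y, ∀ (U : Clopens X) (x : X), h x ∈ α U ↔ x ∈ U := by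
  choose f hf using exists_point_of_clopens_orderIso α
  choose g hg using exists_point_of_clopens_orderIso α.symm
  refine ⟨⟨⟨f, g, fun x => ?_, fun y => ?_⟩, ?_, ?_⟩, fun U x => hf x U⟩
  · refine (eq_of_forall_mem_clopens fun U hU => ?_).symm
    simpa using (hg (f x) (α U)).2 ((hf x U).2 hU)
  · refine (eq_of_forall_mem_clopens fun U hU => ?_).symm
    simpa using (hf (g y) (α.symm U)).2 ((hg y U).2 hU)
  · exact continuous_of_mem_clopens_iff α.symm fun U x => by simpa using hf x (α.symm U)
  · exact continuous_of_mem_clopens_iff α fun U y => by simpa using hg y (α U)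

end StoneDuality

section ClopenCode

instance : Countable (Clopens CantorK) :=
  Clopens.countable_iff_secondCountable.2 inferInstance

instance : Infinite (Clopens CantorK) := by
  refine Infinite.of_injective
    (fun n : ℕ => (⟨{c | c n = true}, (isClopen_discrete {true}).preimage (continuous_apply n)⟩ :
      Clopens CantorK)) fun m n hmn => ?_
  have hcoe : {c : CantorK | c m = true} = {c | c n = true} := congrArg SetLike.coe hmn
  have hmem : (fun k => decide (k = m)) ∈ {c : CantorK | c n = true} := by simp [← hcoe]
  exact (of_decide_eq_true hmem).symm

/-- The relation `f '' U ⊆ V` on clopen sets determines the order and the action of `f`. -/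
theorem exists_conj_iff_exists_clopens_equiv {X : Type*} [TopologicalSpace X] [CompactSpace X]
    [T2Space X] [TotallyDisconnectedSpace X] (f g : X ≃ₜ X) :
    (∃ h : X ≃ₜ X, ∀ z, h (f z) = g (h z)) ↔
      ∃ α : Clopens X ≃ Clopens X, ∀ U V : Clopens X,
        MapsTo f (α U) (α V) ↔ MapsTo g U V := by
  constructor
  · rintro ⟨h, hh⟩
    refine ⟨⟨fun U => ⟨h ⁻¹' U, U.isClopen.preimage h.continuous⟩,
      fun U => ⟨h.symm ⁻¹' U, U.isClopen.preimage h.symm.continuous⟩, fun U => ?_, fun U => ?_⟩,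
      fun U V => ?_⟩
    · ext; simp
    · ext; simp
    · constructor
      · intro hm z hz
        obtain ⟨w, rfl⟩ := h.surjective z
        simpa [hh] using hm (show w ∈ h ⁻¹' U from hz)
      · intro hm z hz
        show h (f z) ∈ (V : Set X)
        rw [hh]
        exact hm hz
  · rintro ⟨α, hα⟩
    let pre (k : X ≃ₜ X) (V : Clopens X) : Clopens X := ⟨k ⁻¹' V, V.isClopen.preimage k.continuous⟩
    have hpre (k : X ≃ₜ X) (U V : Clopens X) : MapsTo k U V ↔ U ≤ pre k V := Iff.rfl
    have pre_surj (k : X ≃ₜ X) (V : Clopens X) : pre k (pre k.symm V) = V := by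
      ext; simp [pre]
    have hle (k : X ≃ₜ X) (U U' : Clopens X) :
        U ≤ U' ↔ ∀ V : Clopens X, MapsTo k U' V → MapsTo k U V := by
      refine ⟨fun h V hV => hV.mono_left h, fun h => ?_⟩
      have := h (pre k.symm U')
      rw [hpre, hpre, pre_surj] at this
      exact this le_rfl
    have hord (U U' : Clopens X) : α U ≤ α U' ↔ U ≤ U' := by
      rw [hle f, hle g, α.surjective.forall]
      simp only [hα]
    let β : Clopens X ≃o Clopens X := ⟨α, fun {U U'} => hord U U'⟩
    have hβ (V : Clopens X) : pre f (β V) = β (pre g V) := by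
      apply le_antisymm
      · rw [← β.symm_apply_le]
        exact (hα _ _).1 (by simp [β, hpre])
      · exact (hα _ _).2 (mapsTo_preimage g V)
    obtain ⟨h, hh⟩ := exists_homeomorph_of_clopens_orderIso β.symm
    refine ⟨h, fun z => eq_of_forall_mem_clopens fun U hU => ?_⟩
    have e1 := hh (β U) (f z)
    have e2 := hh (β (pre g U)) z
    rw [β.symm_apply_apply] at e1 e2
    rw [← hβ] at e2
    exact e2.2 (e1.1 hU)

theorem exists_clopens_reduction : ∃ Ψ : CantorPairs → ((ℕ × ℕ) → Bool), Measurable Ψ ∧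
    ∀ p q : CantorPairs, ConjRel p q ↔ GraphIso (Ψ p) (Ψ q) := by
  classical
  obtain ⟨e⟩ : Nonempty (ℕ ≃ Clopens CantorK) := by
    obtain ⟨d⟩ := nonempty_denumerable (Clopens CantorK)
    exact ⟨(Denumerable.eqv _).symm⟩
  refine ⟨fun p ij => decide (MapsTo p.1.1 (e ij.1) (e ij.2)), ?_, fun p q => ?_⟩
  · refine measurable_pi_iff.2 fun ij => measurable_to_bool ?_
    have hopen := ContinuousMap.isOpen_setOfPred_mapsTo
      (e ij.1).isClosed.isCompact (e ij.2).isOpen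
    have hset := hopen.measurableSet.preimage
      (measurable_fst.comp (measurable_subtype_coe (p := (· ∈ CantorPairs))))
    convert hset using 1
    ext p
    simp
  · rw [conjRel_iff_exists_homeomorph, exists_conj_iff_exists_clopens_equiv]
    constructor
    · rintro ⟨α, hα⟩
      refine ⟨(e.trans α).trans e.symm, fun i j => ?_⟩
      simpa [cantorPairHomeomorph] using hα (e i) (e j)
    · rintro ⟨π, hπ⟩
      refine ⟨(e.symm.trans π).trans e, fun U V => ?_⟩
      simpa [cantorPairHomeomorph] using hπ (e.symm U) (e.symm V)

end ClopenCode

section NorthSouth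

/-- A homeomorphism of the Cantor space that moves every point from the constant sequence `false`
towards the constant sequence `true`: the prefix replacement `00 ↦ 0`, `01 ↦ 10`, `1 ↦ 11`. -/
def northSouth (c : CantorK) : CantorK
  | 0 => c 0 || c 1
  | 1 => if c 0 then c 0 else !c 1 && c 2
  | n + 2 => if c 0 then c (n + 1) else if c 1 then c (n + 2) else c (n + 3)

/-- The inverse of `northSouth`: the prefix replacement `0 ↦ 00`, `10 ↦ 01`, `11 ↦ 1`. -/
def southNorth (c : CantorK) : CantorK
  | 0 => c 0 && c 1
  | 1 => if c 0 then !c 1 || c 2 else c 0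
  | n + 2 => if c 0 then (if c 1 then c (n + 3) else c (n + 2)) else c (n + 1)

theorem southNorth_northSouth (c : CantorK) : southNorth (northSouth c) = c := by
  funext n
  rcases n with _ | _ | _ | n <;> cases h0 : c 0 <;> cases h1 : c 1 <;>
    simp [southNorth, northSouth, h0, h1]

theorem northSouth_southNorth (c : CantorK) : northSouth (southNorth c) = c := by
  funext n
  rcases n with _ | _ | _ | n <;> cases h0 : c 0 <;> cases h1 : c 1 <;>
    simp [southNorth, northSouth, h0, h1]

@[fun_prop]
theorem continuous_northSouth : Continuous northSouth := by
  refine continuous_pi fun n => ?_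
  rcases n with _ | _ | n
  · exact (continuous_of_discreteTopology (f := fun b : Bool × Bool => b.1 || b.2)).comp
      (by fun_prop : Continuous fun c : CantorK => (c 0, c 1))
  · exact (continuous_of_discreteTopology (f := fun b : Bool × Bool × Bool =>
      if b.1 then b.1 else !b.2.1 && b.2.2)).comp
      (by fun_prop : Continuous fun c : CantorK => (c 0, c 1, c 2))
  · exact (continuous_of_discreteTopology (f := fun b : Bool × Bool × Bool × Bool × Bool =>
      if b.1 then b.2.2.1 else if b.2.1 then b.2.2.2.1 else b.2.2.2.2)).comp
      (by fun_prop : Continuous fun c : CantorK => (c 0, c 1, c (n + 1), c (n + 2), c (n + 3)))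

@[fun_prop]
theorem continuous_southNorth : Continuous southNorth := by
  refine continuous_pi fun n => ?_
  rcases n with _ | _ | n
  · exact (continuous_of_discreteTopology (f := fun b : Bool × Bool => b.1 && b.2)).comp
      (by fun_prop : Continuous fun c : CantorK => (c 0, c 1))
  · exact (continuous_of_discreteTopology (f := fun b : Bool × Bool × Bool =>
      if b.1 then !b.2.1 || b.2.2 else b.1)).comp
      (by fun_prop : Continuous fun c : CantorK => (c 0, c 1, c 2))
  · exact (continuous_of_discreteTopology (f := fun b : Bool × Bool × Bool × Bool × Bool =>
      if b.1 then (if b.2.1 then b.2.2.2.2 else b.2.2.2.1) else b.2.2.1)).comp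
      (by fun_prop : Continuous fun c : CantorK => (c 0, c 1, c (n + 1), c (n + 2), c (n + 3)))

theorem northSouth_const (b : Bool) : northSouth (fun _ => b) = fun _ => b := by
  funext n
  rcases n with _ | _ | n <;> cases b <;> simp [northSouth]

theorem southNorth_const (b : Bool) : southNorth (fun _ => b) = fun _ => b := by
  rw [← northSouth_const b, southNorth_northSouth, northSouth_const]

theorem northSouth_apply_of_zero_eq_false {c : CantorK} (h : northSouth c 0 = false) (k : ℕ) :
    northSouth c k = c (k + 1) := by
  simp only [northSouth, Bool.or_eq_false_iff] at h
  rcases k with _ | _ | k <;> simp [northSouth, h]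

theorem southNorth_apply_of_zero_eq_true {c : CantorK} (h : southNorth c 0 = true) (k : ℕ) :
    southNorth c k = c (k + 1) := by
  simp only [southNorth, Bool.and_eq_true] at h
  rcases k with _ | _ | k <;> simp [southNorth, h]

theorem eq_const_false_of_iterate {c : CantorK} (h : ∀ n, (northSouth^[n] c) 0 = false) :
    c = fun _ => false := by
  have key : ∀ k n, (northSouth^[n] c) k = false := by
    intro k
    induction k with
    | zero => exact h
    | succ k ih =>
      intro n
      have hn := ih (n + 1)
      have h0 := h (n + 1)
      rw [Function.iterate_succ_apply'] at hn h0
      rwa [northSouth_apply_of_zero_eq_false h0] at hn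
  exact funext fun k => key k 0

theorem eq_const_true_of_iterate {c : CantorK} (h : ∀ n, (southNorth^[n] c) 0 = true) :
    c = fun _ => true := by
  have key : ∀ k n, (southNorth^[n] c) k = true := by
    intro k
    induction k with
    | zero => exact h
    | succ k ih =>
      intro n
      have hn := ih (n + 1)
      have h0 := h (n + 1)
      rw [Function.iterate_succ_apply'] at hn h0
      rwa [southNorth_apply_of_zero_eq_true h0] at hn
  exact funext fun k => key k 0

theorem exists_eq_const_of_northSouth_eq {c : CantorK} (h : northSouth c = c) :
    ∃ b : Bool, c = fun _ => b := by
  have h' : southNorth c = c := by rw [← h, southNorth_northSouth, h]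
  cases h0 : c 0 with
  | false => exact ⟨false, eq_const_false_of_iterate fun n => by rwa [Function.iterate_fixed h]⟩
  | true => exact ⟨true, eq_const_true_of_iterate fun n => by rwa [Function.iterate_fixed h']⟩

theorem northSouth_iterate_zero_eq_true {c : CantorK} (h : c 0 = true) (n : ℕ) :
    (northSouth^[n] c) 0 = true := by
  induction n with
  | zero => exact h
  | succ n ih => rw [Function.iterate_succ_apply']; simp [northSouth, ih]

theorem eq_const_false_of_tendsto {c : CantorK}
    (h : Tendsto (fun n => northSouth^[n] c) atTop (𝓝 fun _ => false)) : c = fun _ => false := by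
  refine eq_const_false_of_iterate fun m => ?_
  have h0 := (tendsto_pi_nhds.1 h) 0
  rw [nhds_discrete, tendsto_pure] at h0
  obtain ⟨n, hn, hmn⟩ := (h0.and (eventually_ge_atTop m)).exists
  by_contra hm
  have := northSouth_iterate_zero_eq_true (Bool.eq_true_of_not_eq_false hm) (n - m)
  rw [← Function.iterate_add_apply, Nat.sub_add_cancel hmn, hn] at this
  exact Bool.false_ne_true this

/-- A point on an orbit from the constant `false` to the constant `true`. -/
def transitPoint : CantorK := fun k => decide (k = 0)

theorem northSouth_iterate_transitPoint (n : ℕ) :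
    northSouth^[n] transitPoint = fun k => decide (k ≤ n) := by
  induction n with
  | zero => simp [transitPoint, funext_iff]
  | succ n ih =>
    rw [Function.iterate_succ_apply', ih]
    funext k
    rcases k with _ | _ | k <;> simp [northSouth]

theorem southNorth_iterate_transitPoint (n : ℕ) :
    southNorth^[n] transitPoint = fun k => decide (k = n) := by
  induction n with
  | zero => rfl
  | succ n ih =>
    rw [Function.iterate_succ_apply', ih]
    funext k
    rcases n with _ | n <;> rcases k with _ | _ | k <;> simp [southNorth]

theorem tendsto_northSouth_transitPoint :
    Tendsto (fun n => northSouth^[n] transitPoint) atTop (𝓝 fun _ => true) := by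
  refine tendsto_pi_nhds.2 fun k => ?_
  rw [nhds_discrete, tendsto_pure]
  filter_upwards [eventually_ge_atTop k] with n hn
  simpa [northSouth_iterate_transitPoint] using hn

theorem tendsto_southNorth_transitPoint :
    Tendsto (fun n => southNorth^[n] transitPoint) atTop (𝓝 fun _ => false) := by
  refine tendsto_pi_nhds.2 fun k => ?_
  rw [nhds_discrete, tendsto_pure]
  filter_upwards [eventually_gt_atTop k] with n hn
  simpa [southNorth_iterate_transitPoint] using hn.ne

end NorthSouth

section ConnectingOrbits

variable {X Y : Type*} [TopologicalSpace X] [TopologicalSpace Y]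

/-- Some orbit of `F` runs from `p` to `q`. -/
def ConnectsTo (F : X ≃ₜ X) (p q : X) : Prop :=
  ∃ z, Tendsto (fun n => F.symm^[n] z) atTop (𝓝 p) ∧ Tendsto (fun n => F^[n] z) atTop (𝓝 q)

theorem ConnectsTo.map {F : X ≃ₜ X} {G : Y ≃ₜ Y} {p q : X} (h : ConnectsTo F p q) (H : X ≃ₜ Y)
    (hH : ∀ z, H (F z) = G (H z)) : ConnectsTo G (H p) (H q) := by
  obtain ⟨z, hp, hq⟩ := h
  have hfwd : Function.Semiconj H F G := hH
  have hbwd : Function.Semiconj H F.symm G.symm := fun w => by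
    rw [Homeomorph.eq_symm_apply, ← hH, F.apply_symm_apply]
  refine ⟨H z, ?_, ?_⟩
  · simpa only [Function.comp_def, (hbwd.iterate_right _).eq] using (H.continuous.tendsto p).comp hp
  · simpa only [Function.comp_def, (hfwd.iterate_right _).eq] using (H.continuous.tendsto q).comp hq

end ConnectingOrbits

section GraphSystem

variable {V : Type*}

/-- A north-south coordinate for every vertex and a flag for every pair of vertices. -/
abbrev GraphState (V : Type*) : Type _ := (V → CantorK) × (V × V → Bool)

/-- Vertex coordinates move by `northSouth`; the flag of an edge flips while both of its ends are in
the northern half. -/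
def graphStep (e : V × V → Bool) (z : GraphState V) : GraphState V :=
  (fun v => northSouth (z.1 v), fun a => xor (z.2 a) (e a && (z.1 a.1 0 && z.1 a.2 0)))

/-- The inverse of `graphStep`. -/
def graphStepBack (e : V × V → Bool) (z : GraphState V) : GraphState V :=
  (fun v => southNorth (z.1 v),
    fun a => xor (z.2 a) (e a && (southNorth (z.1 a.1) 0 && southNorth (z.1 a.2) 0)))

theorem continuous_xor_and {X : Type*} [TopologicalSpace X] {f g h k : X → Bool}
    (hf : Continuous f) (hg : Continuous g) (hh : Continuous h) (hk : Continuous k) :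
    Continuous fun x => xor (f x) (g x && (h x && k x)) :=
  (continuous_of_discreteTopology
    (f := fun b : Bool × Bool × Bool × Bool => xor b.1 (b.2.1 && (b.2.2.1 && b.2.2.2)))).comp
    (hf.prodMk (hg.prodMk (hh.prodMk hk)))

theorem continuous_graphStep :
    Continuous fun x : (V × V → Bool) × GraphState V => graphStep x.1 x.2 := by
  unfold graphStep
  refine Continuous.prodMk (by fun_prop) (continuous_pi fun a => ?_)
  apply continuous_xor_and <;> fun_prop

theorem continuous_graphStepBack :
    Continuous fun x : (V × V → Bool) × GraphState V => graphStepBack x.1 x.2 := by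
  unfold graphStepBack
  refine Continuous.prodMk (by fun_prop) (continuous_pi fun a => ?_)
  have hcoord (v : V) :
      Continuous fun x : (V × V → Bool) × GraphState V => southNorth (x.2.1 v) 0 :=
    (continuous_pi_iff.1 continuous_southNorth 0).comp
      (by fun_prop : Continuous fun x : (V × V → Bool) × GraphState V => x.2.1 v)
  exact continuous_xor_and (by fun_prop) (by fun_prop) (hcoord a.1) (hcoord a.2)

/-- `graphStep` as a homeomorphism. -/
def graphHomeomorph (e : V × V → Bool) : GraphState V ≃ₜ GraphState V where
  toFun := graphStep e
  invFun := graphStepBack e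
  left_inv z := by simp [graphStep, graphStepBack, southNorth_northSouth]
  right_inv z := by simp [graphStep, graphStepBack, northSouth_southNorth]
  continuous_toFun := continuous_graphStep.comp (by fun_prop : Continuous fun z => (e, z))
  continuous_invFun := continuous_graphStepBack.comp (by fun_prop : Continuous fun z => (e, z))

/-- No edge has both of its ends in `S`. -/
def EdgeFree (e : V × V → Bool) (S : Set V) : Prop := ∀ v ∈ S, ∀ w ∈ S, e (v, w) = false

theorem EdgeFree.mono {e : V × V → Bool} {S T : Set V} (hT : EdgeFree e T) (h : S ⊆ T) :
    EdgeFree e S := fun v hv w hw => hT v (h hv) w (h hw)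

theorem EdgeFree.flip_eq_false {e : V × V → Bool} {S : Set V} (hS : EdgeFree e S) {b : V → Bool}
    (hb : ∀ v ∉ S, b v = false) (a : V × V) : (e a && (b a.1 && b a.2)) = false := by
  by_cases h1 : a.1 ∈ S
  · by_cases h2 : a.2 ∈ S
    · rw [show e a = false from hS a.1 h1 a.2 h2, Bool.false_and]
    · rw [hb _ h2, Bool.and_false, Bool.and_false]
  · rw [hb _ h1, Bool.false_and, Bool.and_false]

open Classical in
/-- The state with vertex coordinates given by the indicator function of `S`. -/
noncomputable def restPoint (S : Set V) (t : V × V → Bool) : GraphState V :=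
  (fun v _ => decide (v ∈ S), t)

theorem restPoint_inj {S S' : Set V} {t t' : V × V → Bool} :
    restPoint S t = restPoint S' t' ↔ S = S' ∧ t = t' := by
  refine ⟨fun h => ?_, by rintro ⟨rfl, rfl⟩; rfl⟩
  obtain ⟨h1, h2⟩ := Prod.ext_iff.1 h
  refine ⟨Set.ext fun v => ?_, h2⟩
  simpa [restPoint] using congrFun (congrFun h1 v) 0

theorem graphHomeomorph_restPoint_eq {e : V × V → Bool} {S : Set V} (hS : EdgeFree e S)
    (t : V × V → Bool) : graphHomeomorph e (restPoint S t) = restPoint S t := by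
  refine Prod.ext (funext fun v => northSouth_const _) (funext fun a => ?_)
  change xor _ _ = _
  rw [hS.flip_eq_false (b := fun v => (restPoint S t).1 v 0)
    (fun v hv => by simp [restPoint, hv]), Bool.xor_false]

theorem exists_eq_restPoint_of_graphHomeomorph_eq {e : V × V → Bool} {z : GraphState V}
    (h : graphHomeomorph e z = z) : ∃ S t, EdgeFree e S ∧ z = restPoint S t := by
  obtain ⟨h1, h2⟩ := Prod.ext_iff.1 h
  choose b hb using fun v => exists_eq_const_of_northSouth_eq (congrFun h1 v)
  refine ⟨{v | b v = true}, z.2, fun v hv w hw => ?_, Prod.ext (funext fun v => ?_) rfl⟩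
  · have hflag : xor (z.2 (v, w)) (e (v, w) && (z.1 v 0 && z.1 w 0)) = z.2 (v, w) :=
      congrFun h2 (v, w)
    rw [hb v, hb w, show b v = true from hv, show b w = true from hw, Bool.and_true,
      Bool.and_true] at hflag
    simpa using congrArg (xor (z.2 (v, w))) hflag
  · simp [restPoint, hb v]

theorem graphHomeomorph_iterate_fst (e : V × V → Bool) (z : GraphState V) (n : ℕ) :
    ((graphHomeomorph e)^[n] z).1 = fun v => northSouth^[n] (z.1 v) := by
  induction n with
  | zero => rfl
  | succ n ih =>
    funext v
    rw [Function.iterate_succ_apply', Function.iterate_succ_apply', ← congrFun ih v]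
    rfl

theorem graphHomeomorph_symm_iterate_fst (e : V × V → Bool) (z : GraphState V) (n : ℕ) :
    ((graphHomeomorph e).symm^[n] z).1 = fun v => southNorth^[n] (z.1 v) := by
  induction n with
  | zero => rfl
  | succ n ih =>
    funext v
    rw [Function.iterate_succ_apply', Function.iterate_succ_apply', ← congrFun ih v]
    rfl

theorem graphHomeomorph_iterate_snd {e : V × V → Bool} {z : GraphState V} {S : Set V}
    (hS : EdgeFree e S) (hz : ∀ v ∉ S, z.1 v = fun _ => false) (n : ℕ) :
    ((graphHomeomorph e)^[n] z).2 = z.2 := by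
  induction n with
  | zero => rfl
  | succ n ih =>
    funext a
    rw [← congrFun ih a, Function.iterate_succ_apply']
    change xor _ _ = _
    rw [hS.flip_eq_false (b := fun v => ((graphHomeomorph e)^[n] z).1 v 0), Bool.xor_false]
    intro v hv
    simp only [graphHomeomorph_iterate_fst, hz v hv,
      Function.iterate_fixed (northSouth_const false)]

theorem graphHomeomorph_symm_iterate_snd {e : V × V → Bool} {z : GraphState V} {S : Set V}
    (hS : EdgeFree e S) (hz : ∀ v ∉ S, z.1 v = fun _ => false) (n : ℕ) :
    ((graphHomeomorph e).symm^[n] z).2 = z.2 := by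
  induction n with
  | zero => rfl
  | succ n ih =>
    funext a
    rw [← congrFun ih a, Function.iterate_succ_apply']
    change xor _ _ = _
    rw [hS.flip_eq_false (b := fun v => southNorth (((graphHomeomorph e).symm^[n] z).1 v) 0),
      Bool.xor_false]
    intro v hv
    simp only [graphHomeomorph_symm_iterate_fst, hz v hv,
      Function.iterate_fixed (southNorth_const false), southNorth_const]

/-- Connecting orbits between fixed points of the graph system record inclusion of edge-free
sets. -/
theorem connectsTo_restPoint_iff {e : V × V → Bool} {S S' : Set V} (hS' : EdgeFree e S')
    {t t' : V × V → Bool} :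
    ConnectsTo (graphHomeomorph e) (restPoint S t) (restPoint S' t') ↔ S ⊆ S' ∧ t = t' := by
  classical
  constructor
  · rintro ⟨z, hp, hq⟩
    have hz : ∀ v ∉ S', z.1 v = fun _ => false := by
      intro v hv
      refine eq_const_false_of_tendsto ?_
      have := tendsto_pi_nhds.1 ((continuous_fst.tendsto _).comp hq) v
      simpa [Function.comp_def, graphHomeomorph_iterate_fst, restPoint, hv] using this
    constructor
    · intro v hv
      by_contra hv'
      have := tendsto_pi_nhds.1 ((continuous_fst.tendsto _).comp hp) v
      simp only [Function.comp_def, graphHomeomorph_symm_iterate_fst, hz v hv',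
        Function.iterate_fixed (southNorth_const false), restPoint, hv, decide_true] at this
      simpa using congrFun (tendsto_nhds_unique tendsto_const_nhds this) 0
    · have h1 := (continuous_snd.tendsto _).comp hp
      have h2 := (continuous_snd.tendsto _).comp hq
      simp only [Function.comp_def, graphHomeomorph_symm_iterate_snd hS' hz,
        graphHomeomorph_iterate_snd hS' hz] at h1 h2
      exact (tendsto_nhds_unique tendsto_const_nhds h1).symm.trans
        (tendsto_nhds_unique tendsto_const_nhds h2)
  · rintro ⟨hsub, rfl⟩
    let z : GraphState V :=
      (fun v => if v ∈ S then fun _ => true else if v ∈ S' then transitPoint else fun _ => false, t)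
    have hz : ∀ v ∉ S', z.1 v = fun _ => false := fun v hv => by
      have hvS : v ∉ S := fun h => hv (hsub h)
      simp [z, hv, hvS]
    refine ⟨z, ?_, ?_⟩
    · refine (Prod.tendsto_iff _ _).2 ⟨tendsto_pi_nhds.2 fun v => ?_, ?_⟩
      · simp only [graphHomeomorph_symm_iterate_fst]
        by_cases hv : v ∈ S
        · simp [z, hv, restPoint, Function.iterate_fixed (southNorth_const true)]
        by_cases hv' : v ∈ S'
        · simpa [z, hv, hv', restPoint] using tendsto_southNorth_transitPoint
        · simp [z, hv, hv', restPoint, Function.iterate_fixed (southNorth_const false)]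
      · simp only [graphHomeomorph_symm_iterate_snd hS' hz]
        exact tendsto_const_nhds
    · refine (Prod.tendsto_iff _ _).2 ⟨tendsto_pi_nhds.2 fun v => ?_, ?_⟩
      · simp only [graphHomeomorph_iterate_fst]
        by_cases hv : v ∈ S
        · simp [z, hv, hsub hv, restPoint, Function.iterate_fixed (northSouth_const true)]
        by_cases hv' : v ∈ S'
        · simpa [z, hv, hv', restPoint] using tendsto_northSouth_transitPoint
        · simp [z, hv, hv', restPoint, Function.iterate_fixed (northSouth_const false)]
      · simp only [graphHomeomorph_iterate_snd hS' hz]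
        exact tendsto_const_nhds

end GraphSystem

section Recovery

variable {V W : Type*} {e : V × V → Bool} {d : W × W → Bool}

theorem exists_map_restPoint_eq (H : GraphState V ≃ₜ GraphState W)
    (hH : ∀ z, H (graphHomeomorph e z) = graphHomeomorph d (H z)) {S : Set V} (hS : EdgeFree e S)
    (t : V × V → Bool) : ∃ T u, EdgeFree d T ∧ H (restPoint S t) = restPoint T u :=
  exists_eq_restPoint_of_graphHomeomorph_eq <| by rw [← hH, graphHomeomorph_restPoint_eq hS]

theorem symm_conj {X Y : Type*} [TopologicalSpace X] [TopologicalSpace Y] {F : X ≃ₜ X}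
    {G : Y ≃ₜ Y} {H : X ≃ₜ Y} (hH : ∀ z, H (F z) = G (H z)) (z : Y) :
    H.symm (G z) = F (H.symm z) := by
  rw [Homeomorph.symm_apply_eq, hH, H.apply_symm_apply]

theorem edgeFree_empty : EdgeFree e ∅ := fun _ hv => hv.elim

theorem edgeFree_singleton (he : ∀ v, e (v, v) = false) (v : V) : EdgeFree e {v} := by
  rintro _ rfl _ rfl
  exact he _

theorem edgeFree_pair_iff (he : ∀ v, e (v, v) = false) {v w : V} :
    EdgeFree e {v, w} ↔ e (v, w) = false ∧ e (w, v) = false := by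
  simp only [EdgeFree, mem_insert_iff, mem_singleton_iff, forall_eq_or_imp, forall_eq, he]
  tauto

theorem exists_map_restPoint_empty (H : GraphState V ≃ₜ GraphState W)
    (hH : ∀ z, H (graphHomeomorph e z) = graphHomeomorph d (H z)) (t : V × V → Bool) :
    ∃ u, H (restPoint ∅ t) = restPoint ∅ u := by
  obtain ⟨T, u, hT, hTu⟩ := exists_map_restPoint_eq H hH edgeFree_empty t
  obtain ⟨S, t', hS, hSt⟩ := exists_map_restPoint_eq H.symm (symm_conj hH) edgeFree_empty u
  have hle : ConnectsTo (graphHomeomorph d) (restPoint ∅ u) (restPoint T u) :=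
    (connectsTo_restPoint_iff hT).2 ⟨empty_subset T, rfl⟩
  have hle' := hle.map H.symm (symm_conj hH)
  rw [hSt, ← hTu, H.symm_apply_apply, connectsTo_restPoint_iff edgeFree_empty] at hle'
  obtain ⟨hS0, rfl⟩ := hle'
  obtain rfl := subset_empty_iff.1 hS0
  exact ⟨u, by rw [← hSt, H.apply_symm_apply]⟩

theorem map_restPoint_of_map_empty (H : GraphState V ≃ₜ GraphState W)
    (hH : ∀ z, H (graphHomeomorph e z) = graphHomeomorph d (H z)) {t : V × V → Bool}
    {u : W × W → Bool} (h0 : H (restPoint ∅ t) = restPoint ∅ u) {S : Set V} (hS : EdgeFree e S) :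
    ∃ T, EdgeFree d T ∧ H (restPoint S t) = restPoint T u := by
  obtain ⟨T, u', hT, hTu⟩ := exists_map_restPoint_eq H hH hS t
  have hle : ConnectsTo (graphHomeomorph e) (restPoint ∅ t) (restPoint S t) :=
    (connectsTo_restPoint_iff hS).2 ⟨empty_subset S, rfl⟩
  have hle' := hle.map H hH
  rw [h0, hTu, connectsTo_restPoint_iff hT] at hle'
  exact ⟨T, hT, hle'.2 ▸ hTu⟩

theorem exists_map_restPoint_singleton (hd : ∀ w, d (w, w) = false)
    (he : ∀ v, e (v, v) = false) (H : GraphState V ≃ₜ GraphState W)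
    (hH : ∀ z, H (graphHomeomorph e z) = graphHomeomorph d (H z)) {t : V × V → Bool}
    {u : W × W → Bool} (h0 : H (restPoint ∅ t) = restPoint ∅ u) (v : V) :
    ∃ w, H (restPoint {v} t) = restPoint {w} u := by
  have h0' : H.symm (restPoint ∅ u) = restPoint ∅ t := by rw [← h0, H.symm_apply_apply]
  obtain ⟨T, hT, hTu⟩ := map_restPoint_of_map_empty H hH h0 (edgeFree_singleton he v)
  obtain rfl | ⟨w, hw⟩ := T.eq_empty_or_nonempty
  · have := restPoint_inj.1 (H.injective (hTu.trans h0.symm))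
    exact absurd this.1 (singleton_ne_empty v)
  obtain ⟨S, hS, hSt⟩ :=
    map_restPoint_of_map_empty H.symm (symm_conj hH) h0' (edgeFree_singleton hd w)
  have hle : ConnectsTo (graphHomeomorph d) (restPoint {w} u) (restPoint T u) :=
    (connectsTo_restPoint_iff hT).2 ⟨singleton_subset_iff.2 hw, rfl⟩
  have hle' := hle.map H.symm (symm_conj hH)
  rw [hSt, ← hTu, H.symm_apply_apply, connectsTo_restPoint_iff (edgeFree_singleton he v),
    subset_singleton_iff_eq] at hle'
  obtain ⟨rfl | rfl, -⟩ := hle'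
  · have := restPoint_inj.1 (H.symm.injective (hSt.trans h0'.symm))
    exact absurd this.1 (singleton_ne_empty w)
  · exact ⟨w, by rw [← hSt, H.apply_symm_apply]⟩

theorem edgeFree_pair_of_map_restPoint (H : GraphState V ≃ₜ GraphState W)
    (hH : ∀ z, H (graphHomeomorph e z) = graphHomeomorph d (H z)) {t : V × V → Bool}
    {u : W × W → Bool} (h0 : H (restPoint ∅ t) = restPoint ∅ u) {θ : V → W}
    (hθ : ∀ v, H (restPoint {v} t) = restPoint {θ v} u) {v w : V} (h : EdgeFree e {v, w}) :
    EdgeFree d {θ v, θ w} := by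
  obtain ⟨T, hT, hTu⟩ := map_restPoint_of_map_empty H hH h0 h
  have hmem (a : V) (ha : a ∈ ({v, w} : Set V)) : θ a ∈ T := by
    have hle : ConnectsTo (graphHomeomorph e) (restPoint {a} t) (restPoint {v, w} t) :=
      (connectsTo_restPoint_iff h).2 ⟨singleton_subset_iff.2 ha, rfl⟩
    have hle' := hle.map H hH
    rw [hθ, hTu, connectsTo_restPoint_iff hT] at hle'
    exact singleton_subset_iff.1 hle'.1
  exact hT.mono (pair_subset (hmem v (by simp)) (hmem w (by simp)))

/-- Conjugate graph systems come from isomorphic graphs. -/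
theorem exists_equiv_of_graphHomeomorph_conj (he : ∀ v, e (v, v) = false)
    (hd : ∀ w, d (w, w) = false) (H : GraphState V ≃ₜ GraphState W)
    (hH : ∀ z, H (graphHomeomorph e z) = graphHomeomorph d (H z)) :
    ∃ θ : V ≃ W, ∀ v w, (d (θ v, θ w) = true ∨ d (θ w, θ v) = true) ↔
      (e (v, w) = true ∨ e (w, v) = true) := by
  obtain ⟨u, h0⟩ := exists_map_restPoint_empty H hH fun _ => false
  have h0' : H.symm (restPoint ∅ u) = restPoint ∅ fun _ => false := by
    rw [← h0, H.symm_apply_apply]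
  choose θ hθ using exists_map_restPoint_singleton hd he H hH h0
  choose η hη using exists_map_restPoint_singleton he hd H.symm (symm_conj hH) h0'
  have hηθ (v : V) : η (θ v) = v := by
    have := hη (θ v)
    rw [← hθ, H.symm_apply_apply, restPoint_inj] at this
    exact (singleton_injective this.1).symm
  have hθη (w : W) : θ (η w) = w := by
    have := hθ (η w)
    rw [← hη, H.apply_symm_apply, restPoint_inj] at this
    exact (singleton_injective this.1).symm
  refine ⟨⟨θ, η, hηθ, hθη⟩, fun v w => ?_⟩
  have hiff : EdgeFree d {θ v, θ w} ↔ EdgeFree e {v, w} := by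
    refine ⟨fun h => ?_, edgeFree_pair_of_map_restPoint H hH h0 hθ⟩
    simpa only [hηθ] using edgeFree_pair_of_map_restPoint H.symm (symm_conj hH) h0' hη h
  rw [edgeFree_pair_iff he, edgeFree_pair_iff hd] at hiff
  have hnot := not_congr hiff
  simp only [not_and_or, Bool.not_eq_false] at hnot
  exact hnot

end Recovery

section Gadget

/-- The vertices of the graph coding a binary relation: every point `i` is represented by a source
`(i, 0)` and a target `(i, 1)` linked by a common neighbour `(i, 2)`; sources carry one leaf
`(i, 3)` and targets two leaves `(i, 4)` and `(i, 5)`. -/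
abbrev GadgetVertex : Type := ℕ × Fin 6

/-- The edges of the graph coding a binary relation, each listed in one direction. -/
def gadgetEdge (x : ℕ × ℕ → Bool) : GadgetVertex × GadgetVertex → Bool
  | ((i, 0), (j, 1)) => x (i, j)
  | ((i, 0), (j, 2)) => decide (i = j)
  | ((i, 1), (j, 2)) => decide (i = j)
  | ((i, 0), (j, 3)) => decide (i = j)
  | ((i, 1), (j, 4)) => decide (i = j)
  | ((i, 1), (j, 5)) => decide (i = j)
  | _ => false

theorem gadgetEdge_self (x : ℕ × ℕ → Bool) (v : GadgetVertex) : gadgetEdge x (v, v) = false := by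
  obtain ⟨i, a⟩ := v
  fin_cases a <;> rfl

theorem continuous_gadgetEdge : Continuous gadgetEdge := by
  refine continuous_pi ?_
  rintro ⟨⟨i, a⟩, ⟨j, b⟩⟩
  fin_cases a <;> fin_cases b <;> first | exact continuous_const | exact continuous_apply (i, j)

theorem gadgetEdge_map {x y : ℕ × ℕ → Bool} {π : ℕ ≃ ℕ} (h : ∀ i j, x (π i, π j) = y (i, j))
    (v w : GadgetVertex) :
    gadgetEdge x ((π v.1, v.2), (π w.1, w.2)) = gadgetEdge y (v, w) := by
  obtain ⟨i, a⟩ := v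
  obtain ⟨j, b⟩ := w
  fin_cases a <;> fin_cases b <;> simp [gadgetEdge, h]

/-- Adjacency in the graph coding a binary relation. -/
def GadgetAdj (x : ℕ × ℕ → Bool) (v w : GadgetVertex) : Prop :=
  gadgetEdge x (v, w) = true ∨ gadgetEdge x (w, v) = true

/-- `v` is a leaf attached to `w`. -/
def IsLeafAt {V : Type*} (A : V → V → Prop) (w v : V) : Prop := ∀ u, A v u ↔ u = w

theorem gadgetAdj_source_target {x : ℕ × ℕ → Bool} {i j : ℕ} :
    GadgetAdj x (i, 0) (j, 1) ↔ x (i, j) = true := by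
  simp [GadgetAdj, gadgetEdge]

theorem exists_gadgetAdj_source_target_iff {x : ℕ × ℕ → Bool} {i j : ℕ} :
    (∃ v, GadgetAdj x (i, 0) v ∧ GadgetAdj x (j, 1) v) ↔ i = j := by
  constructor
  · rintro ⟨⟨k, a⟩, h1, h2⟩
    fin_cases a <;> simp_all [GadgetAdj, gadgetEdge]
  · rintro rfl
    exact ⟨(i, 2), by simp [GadgetAdj, gadgetEdge]⟩

theorem isLeafAt_gadgetAdj_iff {x : ℕ × ℕ → Bool} {v w : GadgetVertex} :
    IsLeafAt (GadgetAdj x) w v ↔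
      v.1 = w.1 ∧ (w.2 = 0 ∧ v.2 = 3 ∨ w.2 = 1 ∧ (v.2 = 4 ∨ v.2 = 5)) := by
  obtain ⟨i, a⟩ := v
  obtain ⟨j, b⟩ := w
  constructor
  · intro h
    have h2 := h (i, 2)
    have h0 := h (i, 0)
    have h1 := h (i, 1)
    have h3 := h (i, 3)
    have h4 := h (i, 4)
    have h5 := h (i, 5)
    fin_cases a <;> fin_cases b <;>
      simp_all [GadgetAdj, gadgetEdge]
  · rintro ⟨rfl, h⟩ ⟨k, c⟩
    dsimp only at h
    rcases h with ⟨rfl, rfl⟩ | ⟨rfl, rfl | rfl⟩ <;> fin_cases c <;>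
      simp [GadgetAdj, gadgetEdge, eq_comm]

theorem exists_two_leaves_iff {x : ℕ × ℕ → Bool} {w : GadgetVertex} :
    (∃ v v', v ≠ v' ∧ IsLeafAt (GadgetAdj x) w v ∧ IsLeafAt (GadgetAdj x) w v') ↔ w.2 = 1 := by
  simp only [isLeafAt_gadgetAdj_iff]
  constructor
  · rintro ⟨⟨i, a⟩, ⟨j, b⟩, hne, ⟨h1, h2⟩, h3, h4⟩
    rcases h2 with ⟨hw, ha⟩ | ⟨hw, -⟩
    · rcases h4 with ⟨-, hb⟩ | ⟨hw', -⟩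
      · exact absurd (Prod.ext (h1.trans h3.symm) (ha.trans hb.symm)) hne
      · exact hw'
    · exact hw
  · intro h
    exact ⟨(w.1, 4), (w.1, 5), by simp, by simp [h], by simp [h]⟩

theorem exists_leaf_iff {x : ℕ × ℕ → Bool} {w : GadgetVertex} :
    (∃ v, IsLeafAt (GadgetAdj x) w v) ↔ w.2 = 0 ∨ w.2 = 1 := by
  simp only [isLeafAt_gadgetAdj_iff]
  constructor
  · rintro ⟨v, -, h⟩
    exact h.imp And.left And.left
  · rintro (h | h)
    · exact ⟨(w.1, 3), by simp [h]⟩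
    · exact ⟨(w.1, 4), by simp [h]⟩

theorem isLeafAt_map_iff {V W : Type*} {A : V → V → Prop} {B : W → W → Prop} {θ : V ≃ W}
    (hθ : ∀ v w, B (θ v) (θ w) ↔ A v w) {v w : V} :
    IsLeafAt B (θ w) (θ v) ↔ IsLeafAt A w v := by
  simp only [IsLeafAt, ← θ.forall_congr_right (q := fun u => B (θ v) u ↔ u = θ w), hθ,
    θ.apply_eq_iff_eq]

variable {x y : ℕ × ℕ → Bool} {θ : GadgetVertex ≃ GadgetVertex}

theorem map_target_iff (hθ : ∀ v w, GadgetAdj y (θ v) (θ w) ↔ GadgetAdj x v w) (w : GadgetVertex) :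
    (θ w).2 = 1 ↔ w.2 = 1 := by
  rw [← exists_two_leaves_iff (x := y), ← exists_two_leaves_iff (x := x)]
  refine θ.exists_congr_right.symm.trans (exists_congr fun v =>
    θ.exists_congr_right.symm.trans (exists_congr fun v' => ?_))
  rw [isLeafAt_map_iff hθ, isLeafAt_map_iff hθ, θ.injective.ne_iff]

theorem map_source_iff (hθ : ∀ v w, GadgetAdj y (θ v) (θ w) ↔ GadgetAdj x v w) (w : GadgetVertex) :
    (θ w).2 = 0 ↔ w.2 = 0 := by
  have h1 := map_target_iff hθ w
  have h2 : ((θ w).2 = 0 ∨ (θ w).2 = 1) ↔ (w.2 = 0 ∨ w.2 = 1) := by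
    rw [← exists_leaf_iff (x := y), ← exists_leaf_iff (x := x), ← θ.exists_congr_right]
    simp only [isLeafAt_map_iff hθ]
  have h01 : (0 : Fin 6) ≠ 1 := by decide
  grind

theorem graphIso_of_gadgetAdj_equiv (hθ : ∀ v w, GadgetAdj y (θ v) (θ w) ↔ GadgetAdj x v w) :
    GraphIso x y := by
  have hθ' (v w : GadgetVertex) : GadgetAdj x (θ.symm v) (θ.symm w) ↔ GadgetAdj y v w := by
    rw [← hθ, θ.apply_symm_apply, θ.apply_symm_apply]
  have hs (i : ℕ) : θ (i, 0) = ((θ (i, 0)).1, 0) := Prod.ext rfl ((map_source_iff hθ _).2 rfl)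
  have hs' (i : ℕ) : θ.symm (i, 0) = ((θ.symm (i, 0)).1, 0) :=
    Prod.ext rfl ((map_source_iff hθ' _).2 rfl)
  have ht (i : ℕ) : θ (i, 1) = ((θ (i, 0)).1, 1) := by
    have h : θ (i, 1) = ((θ (i, 1)).1, 1) := Prod.ext rfl ((map_target_iff hθ _).2 rfl)
    obtain ⟨v, hv, hv'⟩ := (exists_gadgetAdj_source_target_iff (x := x) (i := i)).2 rfl
    rw [← hθ, hs] at hv
    rw [← hθ, h] at hv'
    rw [h, exists_gadgetAdj_source_target_iff.1 ⟨θ v, hv, hv'⟩]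
  have hadj (i j : ℕ) : y ((θ (i, 0)).1, (θ (j, 0)).1) = x (i, j) := by
    have := hθ (i, 0) (j, 1)
    rw [hs, ht, gadgetAdj_source_target, gadgetAdj_source_target] at this
    exact Bool.eq_iff_iff.2 this
  let π : ℕ ≃ ℕ :=
    { toFun i := (θ.symm (i, 0)).1
      invFun i := (θ (i, 0)).1
      left_inv i := by dsimp only; rw [← hs', θ.apply_symm_apply]
      right_inv i := by dsimp only; rw [← hs, θ.symm_apply_apply] }
  refine ⟨π, fun i j => ?_⟩
  rw [← hadj]
  exact congrArg₂ (fun a b => y (a, b)) (π.left_inv i) (π.left_inv j)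

end Gadget

section Reduction

/-- The state space of a countably infinite vertex set is a Cantor set. -/
theorem nonempty_graphState_homeomorph : Nonempty (GraphState GadgetVertex ≃ₜ CantorK) := by
  obtain ⟨σ⟩ : Nonempty ((GadgetVertex × ℕ) ⊕ (GadgetVertex × GadgetVertex) ≃ ℕ) :=
    nonempty_equiv_of_countable
  let curry : (GadgetVertex × ℕ → Bool) ≃ₜ (GadgetVertex → CantorK) :=
    { toEquiv := Equiv.curry _ _ _
      continuous_toFun := continuous_pi fun v => continuous_pi fun n => continuous_apply (v, n)
      continuous_invFun := continuous_pi fun a =>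
        (continuous_apply a.2).comp (continuous_apply (A := fun _ : GadgetVertex => CantorK) a.1) }
  exact ⟨(curry.symm.prodCongr (Homeomorph.refl _)).trans
    (Homeomorph.sumArrowHomeomorphProdArrow.symm.trans
      (Homeomorph.piCongrLeft (Y := fun _ => Bool) σ))⟩

/-- Reindexing the vertices of a graph state. -/
def reindexState {V W : Type*} (σ : W ≃ V) : GraphState V ≃ₜ GraphState W where
  toFun z := (fun w => z.1 (σ w), fun a => z.2 (σ a.1, σ a.2))
  invFun z := (fun v => z.1 (σ.symm v), fun a => z.2 (σ.symm a.1, σ.symm a.2))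
  left_inv z := by simp
  right_inv z := by simp
  continuous_toFun := by fun_prop
  continuous_invFun := by fun_prop

theorem exists_conj_of_graphIso {x y : ℕ × ℕ → Bool} (h : GraphIso x y) :
    ∃ H : GraphState GadgetVertex ≃ₜ GraphState GadgetVertex, ∀ z,
      H (graphHomeomorph (gadgetEdge x) z) = graphHomeomorph (gadgetEdge y) (H z) := by
  obtain ⟨π, hπ⟩ := h
  refine ⟨reindexState (π.prodCongr (Equiv.refl _)), fun z => Prod.ext rfl (funext fun a => ?_)⟩
  exact congrArg (fun b => xor _ (b && _)) (gadgetEdge_map hπ a.1 a.2)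

theorem graphIso_iff_exists_conj {x y : ℕ × ℕ → Bool} :
    GraphIso x y ↔ ∃ H : GraphState GadgetVertex ≃ₜ GraphState GadgetVertex, ∀ z,
      H (graphHomeomorph (gadgetEdge x) z) = graphHomeomorph (gadgetEdge y) (H z) := by
  refine ⟨exists_conj_of_graphIso, fun ⟨H, hH⟩ => ?_⟩
  obtain ⟨θ, hθ⟩ :=
    exists_equiv_of_graphHomeomorph_conj (gadgetEdge_self x) (gadgetEdge_self y) H hH
  exact graphIso_of_gadgetAdj_equiv hθ

/-- The graph system of `x`, transported to the Cantor space. -/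
def gadgetPair (Θ : GraphState GadgetVertex ≃ₜ CantorK) (x : ℕ × ℕ → Bool) : CantorPairs :=
  ⟨(((Θ.symm.trans (graphHomeomorph (gadgetEdge x))).trans Θ : C(CantorK, CantorK)),
    ((Θ.symm.trans (graphHomeomorph (gadgetEdge x)).symm).trans Θ : C(CantorK, CantorK))),
    funext fun z => by simp, funext fun z => by simp⟩

theorem cantorPairHomeomorph_gadgetPair (Θ : GraphState GadgetVertex ≃ₜ CantorK)
    (x : ℕ × ℕ → Bool) (z : CantorK) :
    cantorPairHomeomorph (gadgetPair Θ x) z = Θ (graphHomeomorph (gadgetEdge x) (Θ.symm z)) :=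
  rfl

theorem measurable_gadgetPair (Θ : GraphState GadgetVertex ≃ₜ CantorK) :
    Measurable (gadgetPair Θ) := by
  have hpair : Continuous fun a : (ℕ × ℕ → Bool) × CantorK => (gadgetEdge a.1, Θ.symm a.2) :=
    (continuous_gadgetEdge.comp continuous_fst).prodMk (Θ.symm.continuous.comp continuous_snd)
  refine Measurable.subtype_mk (Measurable.prodMk ?_ ?_)
  · exact (ContinuousMap.continuous_of_continuous_uncurry (fun x => (gadgetPair Θ x).1.1)
      (Θ.continuous.comp (continuous_graphStep.comp hpair))).measurable
  · exact (ContinuousMap.continuous_of_continuous_uncurry (fun x => (gadgetPair Θ x).1.2)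
      (Θ.continuous.comp (continuous_graphStepBack.comp hpair))).measurable

theorem conjRel_gadgetPair_iff (Θ : GraphState GadgetVertex ≃ₜ CantorK) {x y : ℕ × ℕ → Bool} :
    ConjRel (gadgetPair Θ x) (gadgetPair Θ y) ↔ GraphIso x y := by
  rw [conjRel_iff_exists_homeomorph, graphIso_iff_exists_conj]
  simp only [cantorPairHomeomorph_gadgetPair]
  constructor
  · rintro ⟨h, hh⟩
    refine ⟨(Θ.trans h).trans Θ.symm, fun z => ?_⟩
    simpa using congrArg Θ.symm (hh (Θ z))
  · rintro ⟨H, hH⟩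
    refine ⟨(Θ.symm.trans H).trans Θ, fun z => ?_⟩
    simpa using congrArg Θ (hH (Θ.symm z))

theorem exists_graph_system_reduction : ∃ Φ : ((ℕ × ℕ) → Bool) → CantorPairs, Measurable Φ ∧
    ∀ x y : (ℕ × ℕ) → Bool, GraphIso x y ↔ ConjRel (Φ x) (Φ y) := by
  obtain ⟨Θ⟩ := nonempty_graphState_homeomorph
  exact ⟨gadgetPair Θ, measurable_gadgetPair Θ, fun _ _ => (conjRel_gadgetPair_iff Θ).symm⟩

end Reduction

/-- Camerlo–Gao: topological conjugacy of homeomorphisms of the Cantor set is Borel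
bireducible with isomorphism of countable graphs. -/
theorem camerlo_gao :
    (∃ Φ : ((ℕ × ℕ) → Bool) → CantorPairs, Measurable Φ ∧
      ∀ x y : (ℕ × ℕ) → Bool, GraphIso x y ↔ ConjRel (Φ x) (Φ y)) ∧
    (∃ Ψ : CantorPairs → ((ℕ × ℕ) → Bool), Measurable Ψ ∧
      ∀ p q : CantorPairs, ConjRel p q ↔ GraphIso (Ψ p) (Ψ q)) := by
  exact ⟨exists_graph_system_reduction, exists_clopens_reduction⟩
end
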